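/- Let s ∈ ℂ with −1 < Re s < 1 and s ≠ 0. Then for all real α, β > 0 with αβ = 1, √α · ∫_0^∞ K_{s/2}(2παx)·f(x,s) dx = √β · ∫_0^∞ K_{s/2}(2πβx)·f(x,s) dx = (1/(4π³)) ∫_0^∞ Γ((s−1+it)/4)·Γ((s−1−it)/4)·Γ((−s+1+it)/4)·Γ((−s+1−it)/4)·Ξ((t−is)/2)·Ξ((t+is)/2)·cos((t/2)·log α)/(t² + (s+1)²) dt. -/

import Mathlib

open Complex Finset MeasureTheory
open scoped Real BigOperators Classical

/-- Generalized divisor sum `σ_s(n) = ∑_{d ∣ n} d^s` with complex exponent. -/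
noncomputable def csigma (s : ℂ) (n : ℕ) : ℂ := ∑ d ∈ n.divisors, (d : ℂ) ^ s

/-- The modified Bessel function of the second kind,
`K_ν(z) = ∫_0^∞ e^{-z cosh t} cosh(ν t) dt` (for `Re z > 0`). -/
noncomputable def Kbes (ν z : ℂ) : ℂ :=
  ∫ t in Set.Ioi (0 : ℝ), Complex.exp (-z * (Real.cosh t : ℂ)) * Complex.cosh (ν * (t : ℂ))

/-- The Riemann ξ-function. -/
noncomputable def xiR (s : ℂ) : ℂ :=
  (1 / 2) * s * (s - 1) * (π : ℂ) ^ (-s / 2) * Complex.Gamma (s / 2) * riemannZeta s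

/-- The Riemann Ξ-function, `Ξ(t) = ξ(1/2 + it)`. -/
noncomputable def XiR (t : ℂ) : ℂ := xiR (1 / 2 + t * Complex.I)

/-- The function `f(x,s)` of Theorem `newthm`; the term at `n = x` (when `x` is a
positive integer) is interpreted as its limiting value `(s-1) x^{s-3} / 2`. -/
noncomputable def fRam (x : ℝ) (s : ℂ) : ℂ :=
  (x : ℂ) ^ (s / 2) * riemannZeta (1 + s) / (2 * Complex.sin ((π : ℂ) * s / 2))
  + (x : ℂ) ^ (2 - s / 2) / ((π : ℂ) * Complex.cos ((π : ℂ) * s / 2)) *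
      ∑' n : ℕ, csigma (-s) (n + 1) *
        (if x = ((n : ℝ) + 1) then (s - 1) * ((n : ℂ) + 1) ^ (s - 3) / 2
          else (((n : ℂ) + 1) ^ (s - 1) - (x : ℂ) ^ (s - 1)) /
            (((n : ℂ) + 1) ^ 2 - (x : ℂ) ^ 2))
  - (2 : ℂ) ^ (-s) * (π : ℂ) ^ (-1 - s) * (x : ℂ) ^ (-s / 2) *
      (Complex.Gamma s * riemannZeta s *
          ((π : ℂ) * Complex.tan ((π : ℂ) * s / 2) -
            2 * ((Real.eulerMascheroniConstant : ℂ) + (Real.log x : ℂ)))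
        - ((2 * π : ℝ) : ℂ) ^ s * deriv riemannZeta (1 - s) /
            Complex.cos ((π : ℂ) * s / 2))


/-! ### Contour shift -/

lemma cauchy_integrable {P : ℝ} (hP : P ≠ 0) : Integrable (fun t : ℝ => (P ^ 2 + t ^ 2)⁻¹) := by
  have h := (integrable_inv_one_add_sq).comp_div hP
  have h2 := h.const_mul ((P ^ 2)⁻¹)
  refine h2.congr (Filter.Eventually.of_forall fun t => ?_)
  have : P ^ 2 + t ^ 2 ≠ 0 := by positivity
  have : 1 + (t / P) ^ 2 ≠ 0 := by positivity
  simp only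
  field_simp

lemma cauchy_integral {P : ℝ} (hP : 0 < P) : ∫ t : ℝ, P * (P ^ 2 + t ^ 2)⁻¹ = π := by
  have h := Measure.integral_comp_div (fun t : ℝ => (1 + t ^ 2)⁻¹) P
  rw [integral_univ_inv_one_add_sq] at h
  have : ∀ t : ℝ, P * (P ^ 2 + t ^ 2)⁻¹ = P⁻¹ * (1 + (t / P) ^ 2)⁻¹ := by
    intro t
    have : P ^ 2 + t ^ 2 ≠ 0 := by positivity
    have : 1 + (t / P) ^ 2 ≠ 0 := by positivity
    field_simp
  simp_rw [this]
  rw [integral_const_mul, h, abs_of_pos hP, smul_eq_mul]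
  field_simp

lemma ne_line {P : ℝ} (hP : P ≠ 0) (t : ℝ) : (P : ℂ) + t * I ≠ 0 := by
  intro h
  have := congrArg Complex.re h
  simp at this
  exact hP this

lemma normsq_line (P t : ℝ) : ‖(P : ℂ) + t * I‖ ^ 2 = P ^ 2 + t ^ 2 := by
  rw [← Complex.normSq_eq_norm_sq, Complex.normSq_add_mul_I]

lemma two_line_integrable {P Q : ℝ} (hP : P ≠ 0) (hQ : Q ≠ 0) :
    Integrable (fun t : ℝ => 1 / (((P : ℂ) + t * I) * ((Q : ℂ) + t * I))) := by
  have h := ((cauchy_integrable hP).add (cauchy_integrable hQ))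
  refine h.mono' ?_ (Filter.Eventually.of_forall fun t => ?_)
  · refine Continuous.aestronglyMeasurable ?_
    refine continuous_const.div (by fun_prop) fun t => mul_ne_zero (ne_line hP t) (ne_line hQ t)
  · simp only [Pi.add_apply]
    rw [norm_div, norm_mul, norm_one, ← normsq_line, ← normsq_line]
    have h1 := norm_pos_iff.mpr (ne_line hP t)
    have h2 := norm_pos_iff.mpr (ne_line hQ t)
    set x := ‖(P : ℂ) + t * I‖
    set y := ‖(Q : ℂ) + t * I‖
    have : 1 / (x * y) = x⁻¹ * y⁻¹ := by field_simp
    rw [this, ← inv_pow, ← inv_pow]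
    nlinarith [sq_nonneg (x⁻¹ - y⁻¹), sq_nonneg (x⁻¹), sq_nonneg (y⁻¹)]

lemma line_diff_integrable {P Q : ℝ} (hP : P ≠ 0) (hQ : Q ≠ 0) :
    Integrable (fun t : ℝ => 1 / ((P : ℂ) + t * I) - 1 / ((Q : ℂ) + t * I)) := by
  refine ((two_line_integrable hP hQ).const_mul ((Q : ℂ) - P)).congr
    (Filter.Eventually.of_forall fun t => ?_)
  have h1 := ne_line hP t
  have h2 := ne_line hQ t
  simp only
  field_simp
  ring

lemma line_diff_integral {P Q : ℝ} (hP : 0 < P) (hQ : Q < 0) :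
    ∫ t : ℝ, (1 / ((P : ℂ) + t * I) - 1 / ((Q : ℂ) + t * I)) = 2 * π := by
  set f : ℝ → ℂ := fun t => 1 / ((P : ℂ) + t * I) - 1 / ((Q : ℂ) + t * I) with hf
  have hi : Integrable f := line_diff_integrable hP.ne' hQ.ne
  have h1 : ∫ t, f (-t) = ∫ t, f t := integral_neg_eq_self f volume
  have h2 : ∀ t : ℝ, f t + f (-t) =
      ((2 * (P * (P ^ 2 + t ^ 2)⁻¹) + 2 * ((-Q) * ((-Q) ^ 2 + t ^ 2)⁻¹) : ℝ) : ℂ) := by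
    intro t
    have e1 := ne_line hP.ne' t
    have e2 := ne_line hQ.ne t
    have e3 : (P : ℂ) - t * I ≠ 0 := by simpa [sub_eq_add_neg] using ne_line hP.ne' (-t)
    have e4 : (Q : ℂ) - t * I ≠ 0 := by simpa [sub_eq_add_neg] using ne_line hQ.ne (-t)
    have e5 : (P : ℂ) ^ 2 + t ^ 2 = ((P : ℂ) + t * I) * ((P : ℂ) - t * I) := by
      ring_nf; simp
    have e6 : (-Q : ℂ) ^ 2 + t ^ 2 = ((Q : ℂ) + t * I) * ((Q : ℂ) - t * I) := by
      ring_nf; simp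
    simp only [hf]
    push_cast
    rw [e5, e6, neg_mul, ← sub_eq_add_neg, ← sub_eq_add_neg]
    field_simp
    ring
  have h3 : ∫ t, (f t + f (-t)) = 2 * (2 * π) := by
    simp_rw [h2]
    rw [integral_complex_ofReal, integral_add, integral_const_mul 2 (fun t : ℝ => P * (P ^ 2 + t ^ 2)⁻¹),
      integral_const_mul 2 (fun t : ℝ => -Q * ((-Q) ^ 2 + t ^ 2)⁻¹),
      cauchy_integral hP, cauchy_integral (by linarith : 0 < -Q)]
    · push_cast; ring
    · exact ((cauchy_integrable hP.ne').const_mul P).const_mul 2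
    · exact ((cauchy_integrable (by linarith : -Q ≠ 0)).const_mul _).const_mul 2
  rw [integral_add hi hi.comp_neg, h1] at h3
  linear_combination h3 / 2

lemma line_tendsto (P : ℝ) (l : Filter ℝ) (hl : Filter.Tendsto (fun t : ℝ => |t|) l Filter.atTop) :
    Filter.Tendsto (fun t : ℝ => I / ((P : ℂ) + t * I)) l (nhds 0) := by
  rw [tendsto_zero_iff_norm_tendsto_zero]
  have h : Filter.Tendsto (fun t : ℝ => |t|⁻¹) l (nhds 0) := tendsto_inv_atTop_zero.comp hl
  refine squeeze_zero' (Filter.Eventually.of_forall fun _ => norm_nonneg _) ?_ h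
  filter_upwards [hl.eventually_gt_atTop 0] with t ht
  rw [norm_div, norm_I, one_div]
  apply inv_anti₀ ht
  have := Complex.abs_im_le_norm ((P : ℂ) + t * I)
  simpa using this

lemma line_sq_integral {P : ℝ} (hP : P ≠ 0) :
    ∫ t : ℝ, 1 / ((P : ℂ) + t * I) ^ 2 = 0 := by
  have hd : ∀ t : ℝ, HasDerivAt (fun t : ℝ => I / ((P : ℂ) + t * I))
      (1 / ((P : ℂ) + t * I) ^ 2) t := by
    intro t
    have h0 : HasDerivAt (fun z : ℂ => (P : ℂ) + z * I) I (t : ℂ) := by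
      simpa using ((hasDerivAt_id (t : ℂ)).mul_const I).const_add (P : ℂ)
    have h1 : HasDerivAt (fun z : ℂ => I / ((P : ℂ) + z * I)) (1 / ((P : ℂ) + t * I) ^ 2) (t : ℂ) := by
      have := (hasDerivAt_const (t : ℂ) I).div h0 (ne_line hP t)
      refine this.congr_deriv ?_
      rw [I_mul_I]
      ring
    exact h1.comp_ofReal
  have hi : Integrable (fun t : ℝ => 1 / ((P : ℂ) + t * I) ^ 2) := by
    simpa [pow_two] using two_line_integrable hP hP
  have := integral_of_hasDerivAt_of_tendsto hd hi
    (line_tendsto P Filter.atBot Filter.tendsto_abs_atBot_atTop)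
    (line_tendsto P Filter.atTop Filter.tendsto_abs_atTop_atTop)
  simpa using this

lemma shift_eq (a τ : ℝ) (p : ℂ) :
    ((a : ℂ) + τ * I - p) = ((a - p.re : ℝ) : ℂ) + ((τ - p.im : ℝ) : ℂ) * I := by
  conv_lhs => rw [← Complex.re_add_im p]
  push_cast; ring

lemma contour_shift (a b : ℝ) (p q c₁ c₂ d : ℂ)
    (hpa : a < p.re) (hpb : p.re < b) (hqa : a < q.re) (hqb : q.re < b) (g H : ℂ → ℂ)
    (hg : ∀ w : ℂ, a ≤ w.re → w.re ≤ b → DifferentiableAt ℂ g w)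
    (hH : ∀ w : ℂ, a ≤ w.re → w.re ≤ b → w ≠ p → w ≠ q →
      H w = g w + c₁ / (w - p) + c₂ / (w - q) + d / (w - p) ^ 2)
    (hIa : Integrable (fun τ : ℝ => H (a + τ * I)))
    (hIb : Integrable (fun τ : ℝ => H (b + τ * I)))
    (htop : ∀ ε > 0, ∃ T₀ : ℝ, ∀ T : ℝ, T₀ ≤ |T| → ∀ u : ℝ, a ≤ u → u ≤ b → ‖H (u + T * I)‖ ≤ ε) :
    (∫ τ : ℝ, H (b + τ * I)) - ∫ τ : ℝ, H (a + τ * I) = 2 * π * (c₁ + c₂) := by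
  have hab : a < b := hpa.trans hpb
  -- the pieces
  have hR : ∀ p : ℂ, a < p.re → p.re < b →
      Integrable (fun τ : ℝ => 1 / ((b : ℂ) + τ * I - p) - 1 / ((a : ℂ) + τ * I - p)) ∧
      ∫ τ : ℝ, (1 / ((b : ℂ) + τ * I - p) - 1 / ((a : ℂ) + τ * I - p)) = 2 * π := by
    intro p h1 h2
    simp_rw [shift_eq]
    have k1 : b - p.re > 0 := by linarith
    have k2 : a - p.re < 0 := by linarith
    refine ⟨(line_diff_integrable k1.ne' k2.ne).comp_sub_right p.im, ?_⟩
    rw [integral_sub_right_eq_self (fun τ : ℝ => 1 / (((b - p.re : ℝ) : ℂ) + τ * I) -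
      1 / (((a - p.re : ℝ) : ℂ) + τ * I)) p.im]
    exact line_diff_integral k1 k2
  have hS : ∀ c : ℝ, c ≠ p.re →
      Integrable (fun τ : ℝ => 1 / ((c : ℂ) + τ * I - p) ^ 2) ∧
      ∫ τ : ℝ, 1 / ((c : ℂ) + τ * I - p) ^ 2 = 0 := by
    intro c hc
    simp_rw [shift_eq]
    have k1 : c - p.re ≠ 0 := sub_ne_zero.mpr hc
    constructor
    · have := (two_line_integrable k1 k1).comp_sub_right p.im
      simpa [pow_two] using this
    · rw [integral_sub_right_eq_self (fun τ : ℝ => 1 / (((c - p.re : ℝ) : ℂ) + τ * I) ^ 2) p.im]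
      exact line_sq_integral k1
  obtain ⟨hp1, hp2⟩ := hR p hpa hpb
  obtain ⟨hq1, hq2⟩ := hR q hqa hqb
  obtain ⟨sb1, sb2⟩ := hS b hpb.ne'
  obtain ⟨sa1, sa2⟩ := hS a hpa.ne
  set D : ℝ → ℂ := fun τ => g (b + τ * I) - g (a + τ * I) with hD
  have hDeq : ∀ τ : ℝ, D τ = H (b + τ * I) - H (a + τ * I)
      - c₁ * (1 / ((b : ℂ) + τ * I - p) - 1 / ((a : ℂ) + τ * I - p))
      - c₂ * (1 / ((b : ℂ) + τ * I - q) - 1 / ((a : ℂ) + τ * I - q))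
      - d * (1 / ((b : ℂ) + τ * I - p) ^ 2) + d * (1 / ((a : ℂ) + τ * I - p) ^ 2) := by
    intro τ
    have rne : ∀ (c : ℝ) (z : ℂ), c ≠ z.re → (c : ℂ) + τ * I ≠ z := by
      intro c z h1 h2
      apply h1; rw [← h2]; simp
    rw [hH (b + τ * I) (by simp [hab.le]) (by simp) (rne _ _ hpb.ne') (rne _ _ hqb.ne'),
      hH (a + τ * I) (by simp) (by simp [hab.le]) (rne _ _ hpa.ne) (rne _ _ hqa.ne)]
    simp only [hD]
    ring
  have i1 := hIb.sub hIa
  have i2 := i1.sub (hp1.const_mul c₁)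
  have i3 := i2.sub (hq1.const_mul c₂)
  have i4 := i3.sub (sb1.const_mul d)
  have i5 := i4.add (sa1.const_mul d)
  have hDi : Integrable D := i5.congr (Filter.Eventually.of_forall fun τ => (hDeq τ).symm)
  have hDint : ∫ τ, D τ = (∫ τ : ℝ, H (b + τ * I)) - (∫ τ : ℝ, H (a + τ * I))
      - 2 * π * (c₁ + c₂) := by
    have e0 := integral_add' i4 (sa1.const_mul d)
    rw [integral_sub' i3 (sb1.const_mul d),
      integral_sub' i2 (hq1.const_mul c₂), integral_sub' i1 (hp1.const_mul c₁),
      integral_sub' hIb hIa] at e0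
    rw [integral_congr_ae (Filter.Eventually.of_forall hDeq)]
    refine Eq.trans e0 ?_
    simp only [integral_const_mul, hp2, hq2, sb2, sa2]
    ring
  suffices hz : ∫ τ, D τ = 0 by
    rw [hz] at hDint
    linear_combination -hDint
  have hlim : Filter.Tendsto (fun T : ℝ => ∫ τ in (-T)..T, D τ) Filter.atTop (nhds (∫ τ, D τ)) :=
    intervalIntegral_tendsto_integral hDi Filter.tendsto_neg_atTop_atBot Filter.tendsto_id
  refine tendsto_nhds_unique hlim ?_
  -- rectangle identity
  have hrect : ∀ T : ℝ, 0 ≤ T → ∫ τ in (-T)..T, D τ =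
      I * ((∫ x in a..b, g (x + (-T : ℝ) * I)) - ∫ x in a..b, g (x + T * I)) := by
    intro T hT
    have hdiff : DifferentiableOn ℂ g (Set.uIcc a b ×ℂ Set.uIcc (-T) T) := by
      intro w hw
      rw [mem_reProdIm, Set.uIcc_of_le hab.le] at hw
      exact (hg w hw.1.1 hw.1.2).differentiableWithinAt
    have := integral_boundary_rect_eq_zero_of_differentiableOn g (a + (-T : ℝ) * I) (b + T * I)
      (by simpa using hdiff)
    simp only [add_re, ofReal_re, mul_re, I_re, mul_zero, ofReal_im, I_im, mul_one, sub_self,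
      add_zero, add_im, mul_im, zero_add, smul_eq_mul] at this
    have cont : ∀ c : ℝ, a ≤ c → c ≤ b → Continuous (fun τ : ℝ => g (c + τ * I)) := by
      intro c h1 h2
      rw [continuous_iff_continuousAt]
      intro τ
      refine ContinuousAt.comp (f := fun τ : ℝ => (c : ℂ) + τ * I) (g := g) ?_ ?_
      · exact (hg _ (by simpa using h1) (by simpa using h2)).continuousAt
      · fun_prop
    simp only [hD]
    rw [intervalIntegral.integral_sub ((cont b hab.le le_rfl).intervalIntegrable _ _)
      ((cont a le_rfl hab.le).intervalIntegrable _ _)]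
    linear_combination (norm := skip) (-I) * this
    ring_nf
    simp only [I_sq]
    ring
  rw [Metric.tendsto_atTop]
  intro ε hε
  -- bound on g
  obtain ⟨T₀, hT₀⟩ := htop (ε / (16 * (b - a))) (by have := sub_pos.mpr hab; positivity)
  set δ := ε / (16 * (b - a)) with hδ
  have hba := sub_pos.mpr hab
  have hδ0 : 0 < δ := by positivity
  set M := ‖c₁‖ + ‖c₂‖ + ‖d‖ with hM
  have hM0 : 0 ≤ M := by positivity
  set R := |p.im| + |q.im| + 1 + M / δ with hR'
  have hRp : 0 ≤ M / δ := by positivity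
  have gb : ∀ T : ℝ, max T₀ R ≤ |T| → ∀ u : ℝ, a ≤ u → u ≤ b → ‖g (u + T * I)‖ ≤ 4 * δ := by
    intro T hT u hu1 hu2
    have h1 : T₀ ≤ |T| := (le_max_left _ _).trans hT
    have h2 : R ≤ |T| := (le_max_right _ _).trans hT
    have far : ∀ z : ℂ, |z.im| ≤ |p.im| + |q.im| → 1 + M / δ ≤ ‖(u : ℂ) + T * I - z‖ := by
      intro z hz
      have := Complex.abs_im_le_norm ((u : ℂ) + T * I - z)
      simp at this
      have h3 := abs_sub_abs_le_abs_sub T z.im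
      linarith
    have fp := far p (by linarith [abs_nonneg q.im])
    have fq := far q (by linarith [abs_nonneg p.im])
    have pos : 0 < 1 + M / δ := by linarith
    have np : (u : ℂ) + T * I - p ≠ 0 := norm_pos_iff.mp (pos.trans_le fp)
    have nq : (u : ℂ) + T * I - q ≠ 0 := norm_pos_iff.mp (pos.trans_le fq)
    have hh := hH (u + T * I) (by simpa using hu1) (by simpa using hu2) (sub_ne_zero.mp np)
      (sub_ne_zero.mp nq)
    have hge : g (u + T * I) = H (u + T * I) - c₁ / (u + T * I - p) - c₂ / (u + T * I - q)
      - d / (u + T * I - p) ^ 2 := by rw [hh]; ring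
    have small : ∀ (c : ℂ) (r : ℝ), ‖c‖ ≤ M → 1 + M / δ ≤ r → ‖c‖ / r ≤ δ := by
      intro c r hc hr
      rw [div_le_iff₀ (pos.trans_le hr)]
      have : M ≤ δ * (1 + M / δ) := by
        have : δ * (1 + M / δ) = δ + M := by field_simp
        linarith
      nlinarith
    have s1 : ‖c₁ / ((u : ℂ) + T * I - p)‖ ≤ δ := by
      rw [norm_div]; exact small _ _ (by rw [hM]; linarith [norm_nonneg c₂, norm_nonneg d]) fp
    have s2 : ‖c₂ / ((u : ℂ) + T * I - q)‖ ≤ δ := by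
      rw [norm_div]; exact small _ _ (by rw [hM]; linarith [norm_nonneg c₁, norm_nonneg d]) fq
    have s3 : ‖d / ((u : ℂ) + T * I - p) ^ 2‖ ≤ δ := by
      rw [norm_div, norm_pow]
      refine small _ _ (by rw [hM]; linarith [norm_nonneg c₁, norm_nonneg c₂]) (fp.trans ?_)
      nlinarith
    rw [hge]
    have t1 := norm_sub_le (H (u + T * I) - c₁ / (u + T * I - p) - c₂ / (u + T * I - q))
      (d / (u + T * I - p) ^ 2)
    have t2 := norm_sub_le (H (u + T * I) - c₁ / (u + T * I - p)) (c₂ / (u + T * I - q))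
    have t3 := norm_sub_le (H (u + T * I)) (c₁ / (u + T * I - p))
    have t4 := hT₀ T h1 u hu1 hu2
    linarith
  refine ⟨max (max T₀ R) 0, fun T hT => ?_⟩
  have hT0 : 0 ≤ T := (le_max_right _ _).trans hT
  have hT1 : max T₀ R ≤ |T| := by rw [abs_of_nonneg hT0]; exact (le_max_left _ _).trans hT
  rw [dist_zero_right, hrect T hT0, norm_mul, norm_I, one_mul]
  have bound : ∀ T : ℝ, max T₀ R ≤ |T| → ‖∫ x in a..b, g (x + T * I)‖ ≤ 4 * δ * (b - a) := by
    intro T hT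
    have := intervalIntegral.norm_integral_le_of_norm_le_const (a := a) (b := b)
      (f := fun x : ℝ => g (x + T * I)) (C := 4 * δ) (by
        intro x hx
        rw [Set.uIoc_of_le hab.le] at hx
        exact gb T hT x hx.1.le hx.2)
    rwa [abs_of_pos hba] at this
  have b1 := bound T hT1
  have b2 := bound (-T) (by rwa [abs_neg])
  have := norm_sub_le (∫ x in a..b, g (x + (-T : ℝ) * I)) (∫ x in a..b, g (x + T * I))
  have e : δ * (b - a) = ε / 16 := by rw [hδ]; field_simp
  nlinarith


/-! ### A polynomial bound for zeta in the right half plane -/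

noncomputable def frc : ℝ → ℂ := (Set.Ioi (1 : ℝ)).indicator (fun t => ((Int.fract t : ℝ) : ℂ))

lemma frc_norm_le (t : ℝ) : ‖frc t‖ ≤ 1 := by
  unfold frc
  by_cases h : t ∈ Set.Ioi (1 : ℝ)
  · rw [Set.indicator_of_mem h, Complex.norm_real, Real.norm_of_nonneg (Int.fract_nonneg t)]
    exact (Int.fract_lt_one t).le
  · rw [Set.indicator_of_notMem h]; simp

lemma frc_meas : Measurable frc := by
  unfold frc
  refine Measurable.indicator ?_ measurableSet_Ioi
  exact Complex.measurable_ofReal.comp measurable_fract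

lemma frc_loc : LocallyIntegrableOn frc (Set.Ioi 0) := by
  have : LocallyIntegrable frc volume := by
    refine (MeasureTheory.locallyIntegrable_const (1 : ℝ)).mono frc_meas.aestronglyMeasurable ?_
    exact Filter.Eventually.of_forall fun t => by simpa using frc_norm_le t
  exact this.locallyIntegrableOn _

lemma frc_mellin_diff {s : ℂ} (hs : 0 < s.re) : DifferentiableAt ℂ (fun s => mellin frc (-s)) s := by
  have : DifferentiableAt ℂ (mellin frc) (-s) := by
    refine mellin_differentiableAt_of_isBigO_rpow (a := 0) (b := -s.re - 1) frc_loc ?_ (by simpa) ?_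
      (by simp)
    · refine Asymptotics.IsBigO.of_bound 1 (Filter.Eventually.of_forall fun t => ?_)
      simpa using frc_norm_le t
    · refine Filter.EventuallyEq.trans_isBigO (f₂ := fun _ => (0 : ℂ)) ?_ (Asymptotics.isBigO_zero _ _)
      filter_upwards [mem_nhdsWithin_of_mem_nhds (Iio_mem_nhds one_pos)] with t ht
      simp only [frc]
      rw [Set.indicator_of_notMem]
      simpa using ht.le
  exact this.comp s (differentiableAt_id.neg)

lemma frc_mellin_eq (s : ℂ) : mellin frc (-s) =
    ∫ t in Set.Ioi (1 : ℝ), ((Int.fract t : ℝ) : ℂ) * (t : ℂ) ^ (-(s + 1)) := by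
  unfold mellin frc
  rw [← integral_indicator measurableSet_Ioi, ← integral_indicator measurableSet_Ioi]
  congr 1
  ext t
  by_cases h : t ∈ Set.Ioi (1 : ℝ)
  · have h0 : t ∈ Set.Ioi (0 : ℝ) := lt_trans one_pos (Set.mem_Ioi.mp h)
    rw [Set.indicator_of_mem h0, Set.indicator_of_mem h, Set.indicator_of_mem h, smul_eq_mul,
      mul_comm]
    congr 2
    ring
  · rw [Set.indicator_of_notMem h]
    by_cases h0 : t ∈ Set.Ioi (0 : ℝ)
    · rw [Set.indicator_of_mem h0, Set.indicator_of_notMem h]; simp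
    · rw [Set.indicator_of_notMem h0]

lemma frc_int {s : ℂ} (hs : 0 < s.re) :
    IntegrableOn (fun t : ℝ => ((Int.fract t : ℝ) : ℂ) * (t : ℂ) ^ (-(s + 1))) (Set.Ioi 1) := by
  have h := integrableOn_Ioi_rpow_of_lt (a := -(s.re + 1)) (by linarith) one_pos
  refine h.mono' ?_ ?_
  · refine AEStronglyMeasurable.mul ?_ ?_
    · exact (Complex.measurable_ofReal.comp measurable_fract).aestronglyMeasurable
    · refine ContinuousOn.aestronglyMeasurable ?_ measurableSet_Ioi
      intro t ht
      refine ContinuousAt.continuousWithinAt ?_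
      exact Complex.continuousAt_ofReal_cpow_const _ _ (Or.inr (by have := Set.mem_Ioi.mp ht; linarith))
  · refine (ae_restrict_iff' measurableSet_Ioi).mpr (Filter.Eventually.of_forall fun t ht => ?_)
    have ht0 : 0 < t := one_pos.trans ht
    rw [norm_mul, Complex.norm_cpow_eq_rpow_re_of_pos ht0, Complex.norm_real,
      Real.norm_of_nonneg (Int.fract_nonneg t)]
    have := Int.fract_lt_one t
    simp only [neg_re, add_re, one_re]
    exact mul_le_of_le_one_left (by positivity) this.le

lemma frc_mellin_norm {s : ℂ} (hs : 0 < s.re) : ‖mellin frc (-s)‖ ≤ 1 / s.re := by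
  rw [frc_mellin_eq]
  have h := integrableOn_Ioi_rpow_of_lt (a := -(s.re + 1)) (by linarith) one_pos
  refine (norm_integral_le_of_norm_le h ?_).trans ?_
  · refine (ae_restrict_iff' measurableSet_Ioi).mpr (Filter.Eventually.of_forall fun t ht => ?_)
    have ht0 : 0 < t := one_pos.trans ht
    rw [norm_mul, Complex.norm_cpow_eq_rpow_re_of_pos ht0, Complex.norm_real,
      Real.norm_of_nonneg (Int.fract_nonneg t)]
    have := Int.fract_lt_one t
    simp only [neg_re, add_re, one_re]
    exact mul_le_of_le_one_left (by positivity) this.le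
  · rw [integral_Ioi_rpow_of_lt (by linarith) one_pos]
    simp only [Real.one_rpow]
    apply le_of_eq
    have : -(s.re + 1) + 1 = - s.re := by ring
    rw [this, neg_div_neg_eq]

lemma zeta1_eq_of_one_lt {s : ℂ} (hs : 1 < s.re) :
    riemannZeta₁ s = s - s * (s - 1) * mellin frc (-s) := by
  have hs1 : s ≠ 1 := by rintro rfl; simp at hs
  have h := LSeries_eq_mul_integral' (1 : ℕ → ℂ) zero_le_one hs (by
    refine Asymptotics.IsBigO.of_bound 1 (Filter.Eventually.of_forall fun n => ?_)
    simp)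
  rw [LSeries_one_eq_riemannZeta hs] at h
  have e : ∫ t in Set.Ioi (1 : ℝ), (∑ k ∈ Icc 1 ⌊t⌋₊, (1 : ℕ → ℂ) k) * (t : ℂ) ^ (-(s + 1))
     = (∫ t in Set.Ioi (1 : ℝ), (t : ℂ) ^ (-s)) - mellin frc (-s) := by
    rw [frc_mellin_eq, ← integral_sub]
    · refine setIntegral_congr_fun measurableSet_Ioi fun t ht => ?_
      have ht0 : 0 < t := one_pos.trans ht
      simp only [Pi.one_apply, sum_const, Nat.card_Icc, add_tsub_cancel_right, nsmul_eq_mul, mul_one]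
      have h1 : (⌊t⌋₊ : ℂ) = t - ((Int.fract t : ℝ) : ℂ) := by
        have : (⌊t⌋₊ : ℝ) = t - Int.fract t := by
          rw [Int.self_sub_fract]
          exact natCast_floor_eq_intCast_floor ht0.le
        rw [← Complex.ofReal_sub, ← this]; simp
      have h2 : (t : ℂ) ^ (-s) = t * (t : ℂ) ^ (-(s + 1)) := by
        have ht' : (t : ℂ) ≠ 0 := by exact_mod_cast ht0.ne'
        rw [show -s = 1 + -(s + 1) by ring, Complex.cpow_add _ _ ht', cpow_one]
      rw [h1, h2]; ring
    · exact integrableOn_Ioi_cpow_of_lt (by simpa using hs) one_pos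
    · exact frc_int (by linarith)
  rw [e, integral_Ioi_cpow_of_lt (by simpa using hs) one_pos] at h
  have h2 := riemannZeta_eq_inv_sub_mul hs1
  have hs1' : s - 1 ≠ 0 := sub_ne_zero.mpr hs1
  have h3 : riemannZeta₁ s = (s - 1) * riemannZeta s := by rw [h2]; field_simp
  rw [h3, h]
  have : -s + 1 ≠ 0 := by intro hh; apply hs1'; linear_combination -hh
  simp only [ofReal_one, one_cpow]
  have e2 : -1 / (-s + 1) = 1 / (s - 1) := by
    field_simp
    ring
  rw [e2]
  field_simp

lemma zeta1_eq {s : ℂ} (hs : 0 < s.re) :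
    riemannZeta₁ s = s - s * (s - 1) * mellin frc (-s) := by
  have hU : IsOpen {s : ℂ | 0 < s.re} := isOpen_lt continuous_const Complex.continuous_re
  have h1 : AnalyticOnNhd ℂ riemannZeta₁ {s : ℂ | 0 < s.re} :=
    differentiable_riemannZeta₁.differentiableOn.analyticOnNhd hU
  have h2 : AnalyticOnNhd ℂ (fun s => s - s * (s - 1) * mellin frc (-s)) {s : ℂ | 0 < s.re} := by
    refine DifferentiableOn.analyticOnNhd (fun z hz => ?_) hU
    have := frc_mellin_diff hz
    exact (DifferentiableAt.sub differentiableAt_id ((differentiableAt_id.mul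
      (differentiableAt_id.sub_const 1)).mul this)).differentiableWithinAt
  have hc : IsPreconnected {s : ℂ | 0 < s.re} := (convex_halfSpace_re_gt 0).isPreconnected
  refine h1.eqOn_of_preconnected_of_eventuallyEq h2 hc (z₀ := 2) (by simp) ?_ hs
  have : ∀ᶠ z : ℂ in nhds 2, 1 < z.re :=
    (isOpen_lt continuous_const Complex.continuous_re).mem_nhds (by simp)
  filter_upwards [this] with z hz using zeta1_eq_of_one_lt hz

lemma zeta1_bound {s : ℂ} {δ : ℝ} (hδ : 0 < δ) (hs : δ ≤ s.re) :
    ‖riemannZeta₁ s‖ ≤ (1 + 1 / δ) * (1 + ‖s‖) ^ 2 := by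
  have h0 : 0 < s.re := hδ.trans_le hs
  rw [zeta1_eq h0]
  have h1 := frc_mellin_norm h0
  have h2 : 1 / s.re ≤ 1 / δ := one_div_le_one_div_of_le hδ hs
  have h3 : ‖s - 1‖ ≤ ‖s‖ + 1 := (norm_sub_le _ _).trans (by simp)
  have h4 := norm_sub_le s (s * (s - 1) * mellin frc (-s))
  rw [norm_mul, norm_mul] at h4
  have h5 : ‖s‖ * ‖s - 1‖ * ‖mellin frc (-s)‖ ≤ ‖s‖ * (‖s‖ + 1) * (1 / δ) := by
    gcongr
    exact h1.trans h2
  have hn := norm_nonneg s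
  have hd : 0 < 1 / δ := by positivity
  refine h4.trans ((add_le_add_right h5 _).trans ?_)
  nlinarith [mul_nonneg hn hd.le]


/-! ### Contour shift for exponentially decaying functions -/

lemma integrable_of_exp_decay {φ : ℝ → ℂ} (hc : Continuous φ) {C T₀ : ℝ}
    (h : ∀ t : ℝ, T₀ ≤ |t| → ‖φ t‖ ≤ C * Real.exp (-|t|)) : Integrable φ := by
  have hexp : Integrable (fun t : ℝ => Real.exp (-|t|)) := by
    have h1 : IntegrableOn (fun t : ℝ => Real.exp (-|t|)) (Set.Iic 0) := by
      refine (integrableOn_exp_Iic 0).congr_fun (fun t ht => ?_) measurableSet_Iic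
      rw [abs_of_nonpos (Set.mem_Iic.mp ht), neg_neg]
    have h2 : IntegrableOn (fun t : ℝ => Real.exp (-|t|)) (Set.Ioi 0) := by
      refine (exp_neg_integrableOn_Ioi 0 one_pos).congr_fun (fun t ht => ?_) measurableSet_Ioi
      simp only
      rw [abs_of_pos (Set.mem_Ioi.mp ht), neg_one_mul]
    rw [← integrableOn_univ, ← Set.Iic_union_Ioi (a := (0 : ℝ))]
    exact h1.union h2
  refine LocallyIntegrable.integrable_of_isBigO_cocompact (hc.locallyIntegrable)
    (g := fun t : ℝ => Real.exp (-|t|)) ?_ (hexp.integrableAtFilter _)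
  refine Asymptotics.IsBigO.of_bound C ?_
  have : ∀ᶠ t : ℝ in Filter.cocompact ℝ, T₀ ≤ ‖t‖ :=
    (tendsto_norm_cocompact_atTop (E := ℝ)).eventually_ge_atTop T₀
  filter_upwards [this] with t ht
  rw [Real.norm_of_nonneg (Real.exp_pos _).le]
  exact h t ht

lemma contour_shift' (a b : ℝ) (p q c₁ c₂ d : ℂ)
    (hpa : a < p.re) (hpb : p.re < b) (hqa : a < q.re) (hqb : q.re < b) (g H : ℂ → ℂ)
    (hg : ∀ w : ℂ, a ≤ w.re → w.re ≤ b → DifferentiableAt ℂ g w)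
    (hH : ∀ w : ℂ, a ≤ w.re → w.re ≤ b → w ≠ p → w ≠ q →
      H w = g w + c₁ / (w - p) + c₂ / (w - q) + d / (w - p) ^ 2)
    (C T₀ : ℝ)
    (hdec : ∀ T : ℝ, T₀ ≤ |T| → ∀ u : ℝ, a ≤ u → u ≤ b → ‖H (u + T * I)‖ ≤ C * Real.exp (-|T|)) :
    Integrable (fun τ : ℝ => H (a + τ * I)) ∧ Integrable (fun τ : ℝ => H (b + τ * I)) ∧
    (∫ τ : ℝ, H (b + τ * I)) - ∫ τ : ℝ, H (a + τ * I) = 2 * π * (c₁ + c₂) := by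
  have hab : a < b := hpa.trans hpb
  have hline : ∀ c : ℝ, a ≤ c → c ≤ b → c ≠ p.re → c ≠ q.re →
      Integrable (fun τ : ℝ => H (c + τ * I)) := by
    intro c h1 h2 h3 h4
    have rne : ∀ (τ : ℝ) (z : ℂ), c ≠ z.re → (c : ℂ) + τ * I ≠ z := by
      intro τ z h1 h2
      apply h1; rw [← h2]; simp
    refine integrable_of_exp_decay (C := C) (T₀ := T₀) ?_ (fun t ht => hdec t ht c h1 h2)
    have e : (fun τ : ℝ => H (c + τ * I)) = fun τ : ℝ => g (c + τ * I) + c₁ / (c + τ * I - p)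
        + c₂ / (c + τ * I - q) + d / (c + τ * I - p) ^ 2 := by
      ext τ
      exact hH _ (by simpa using h1) (by simpa using h2) (rne τ p h3) (rne τ q h4)
    rw [e]
    have hgc : Continuous (fun τ : ℝ => g (c + τ * I)) := by
      rw [continuous_iff_continuousAt]
      intro τ
      refine ContinuousAt.comp (f := fun τ : ℝ => (c : ℂ) + τ * I) (g := g) ?_ ?_
      · exact (hg _ (by simpa using h1) (by simpa using h2)).continuousAt
      · fun_prop
    refine ((hgc.add (continuous_const.div (by fun_prop) fun τ => ?_)).add
      (continuous_const.div (by fun_prop) fun τ => ?_)).add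
      (continuous_const.div (by fun_prop) fun τ => ?_)
    · exact sub_ne_zero.mpr (rne τ p h3)
    · exact sub_ne_zero.mpr (rne τ q h4)
    · exact pow_ne_zero _ (sub_ne_zero.mpr (rne τ p h3))
  have ia := hline a le_rfl hab.le hpa.ne hqa.ne
  have ib := hline b hab.le le_rfl hpb.ne' hqb.ne'
  refine ⟨ia, ib, contour_shift a b p q c₁ c₂ d hpa hpb hqa hqb g H hg hH ia ib ?_⟩
  intro ε hε
  have ht : Filter.Tendsto (fun x : ℝ => C * Real.exp (-x)) Filter.atTop (nhds 0) := by
    simpa using Real.tendsto_exp_neg_atTop_nhds_zero.const_mul C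
  obtain ⟨T₁, hT₁⟩ := Filter.eventually_atTop.mp (ht.eventually_le_const hε)
  refine ⟨max T₀ T₁, fun T hT u hu1 hu2 => ?_⟩
  exact (hdec T ((le_max_left _ _).trans hT) u hu1 hu2).trans (hT₁ _ ((le_max_right _ _).trans hT))

/-- two simple poles -/
lemma contour_shift_simple (a b : ℝ) (p q : ℂ) (hpq : p ≠ q)
    (hpa : a < p.re) (hpb : p.re < b) (hqa : a < q.re) (hqb : q.re < b) (A H : ℂ → ℂ) (U : Set ℂ)
    (hU : IsOpen U) (hsub : ∀ w : ℂ, a ≤ w.re → w.re ≤ b → w ∈ U) (hA : DifferentiableOn ℂ A U)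
    (hH : ∀ w : ℂ, a ≤ w.re → w.re ≤ b → w ≠ p → w ≠ q → H w = A w / ((w - p) * (w - q)))
    (C T₀ : ℝ)
    (hdec : ∀ T : ℝ, T₀ ≤ |T| → ∀ u : ℝ, a ≤ u → u ≤ b → ‖H (u + T * I)‖ ≤ C * Real.exp (-|T|)) :
    Integrable (fun τ : ℝ => H (a + τ * I)) ∧ Integrable (fun τ : ℝ => H (b + τ * I)) ∧
    (∫ τ : ℝ, H (b + τ * I)) - ∫ τ : ℝ, H (a + τ * I) =
      2 * π * (A p / (p - q) + A q / (q - p)) := by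
  have hpq' := sub_ne_zero.mpr hpq
  have hqp' := sub_ne_zero.mpr hpq.symm
  have hd : ∀ c : ℂ, a < c.re → c.re < b → DifferentiableOn ℂ (dslope A c) U := by
    intro c h1 h2
    exact (Complex.differentiableOn_dslope (hU.mem_nhds (hsub c h1.le h2.le))).mpr hA
  refine contour_shift' a b p q _ _ 0 hpa hpb hqa hqb
    (fun w => (dslope A p w - dslope A q w) / (p - q)) H ?_ ?_ C T₀ hdec
  · intro w h1 h2
    have hn := hU.mem_nhds (hsub w h1 h2)
    exact (((hd p hpa hpb).differentiableAt hn).sub ((hd q hqa hqb).differentiableAt hn)).div_const _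
  · intro w h1 h2 h3 h4
    rw [hH w h1 h2 h3 h4, dslope_of_ne _ h3, dslope_of_ne _ h4, slope_def_field, slope_def_field]
    have h3' := sub_ne_zero.mpr h3
    have h4' := sub_ne_zero.mpr h4
    have : q - p = -(p - q) := by ring
    rw [this]
    field_simp
    ring

/-- a double pole at `p` and a simple pole at `q` -/
lemma contour_shift_double (a b : ℝ) (p q : ℂ) (hpq : p ≠ q)
    (hpa : a < p.re) (hpb : p.re < b) (hqa : a < q.re) (hqb : q.re < b) (A H : ℂ → ℂ) (U : Set ℂ)
    (hU : IsOpen U) (hsub : ∀ w : ℂ, a ≤ w.re → w.re ≤ b → w ∈ U) (hA : DifferentiableOn ℂ A U)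
    (hH : ∀ w : ℂ, a ≤ w.re → w.re ≤ b → w ≠ p → w ≠ q → H w = A w / ((w - p) ^ 2 * (w - q)))
    (C T₀ : ℝ)
    (hdec : ∀ T : ℝ, T₀ ≤ |T| → ∀ u : ℝ, a ≤ u → u ≤ b → ‖H (u + T * I)‖ ≤ C * Real.exp (-|T|)) :
    Integrable (fun τ : ℝ => H (a + τ * I)) ∧ Integrable (fun τ : ℝ => H (b + τ * I)) ∧
    (∫ τ : ℝ, H (b + τ * I)) - ∫ τ : ℝ, H (a + τ * I) =
      2 * π * ((deriv A p / (p - q) - A p / (p - q) ^ 2) + A q / (p - q) ^ 2) := by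
  have hpq' := sub_ne_zero.mpr hpq
  have hd : ∀ B : ℂ → ℂ, DifferentiableOn ℂ B U → ∀ c : ℂ, a < c.re → c.re < b →
      DifferentiableOn ℂ (dslope B c) U := by
    intro B hB c h1 h2
    exact (Complex.differentiableOn_dslope (hU.mem_nhds (hsub c h1.le h2.le))).mpr hB
  have d1 := hd A hA p hpa hpb
  have d2 := hd A hA q hqa hqb
  have d3 := hd _ d1 p hpa hpb
  refine contour_shift' a b p q _ _ (A p / (p - q)) hpa hpb hqa hqb
    (fun w => dslope (dslope A p) p w / (p - q) - dslope A p w / (p - q) ^ 2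
      + dslope A q w / (p - q) ^ 2) H ?_ ?_ C T₀ hdec
  · intro w h1 h2
    have hn := hU.mem_nhds (hsub w h1 h2)
    exact (((d3.differentiableAt hn).div_const _).sub ((d1.differentiableAt hn).div_const _)).add
      ((d2.differentiableAt hn).div_const _)
  · intro w h1 h2 h3 h4
    rw [hH w h1 h2 h3 h4, dslope_of_ne (dslope A p) h3, slope_def_field, dslope_same,
      dslope_of_ne _ h3, dslope_of_ne _ h4, slope_def_field, slope_def_field]
    have h3' := sub_ne_zero.mpr h3
    have h4' := sub_ne_zero.mpr h4
    field_simp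
    ring

/-! ### Trigonometric bounds -/

/-- `sin (π z / 2) / z` -/
noncomputable def Sfun : ℂ → ℂ := dslope (fun z : ℂ => Complex.sin (π / 2 * z)) 0

lemma Sfun_diff : Differentiable ℂ Sfun := by
  rw [← differentiableOn_univ]
  refine (Complex.differentiableOn_dslope (Filter.univ_mem)).mpr ?_
  exact (Complex.differentiable_sin.comp (differentiable_id.const_mul _)).differentiableOn

lemma sin_hasDeriv : HasDerivAt (fun z : ℂ => Complex.sin (π / 2 * z)) (π / 2) 0 := by
  have h := ((hasDerivAt_id (0 : ℂ)).const_mul (π / 2 : ℂ)).csin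
  simpa using h

lemma Sfun_zero : Sfun 0 = π / 2 := by
  unfold Sfun
  rw [dslope_same, sin_hasDeriv.deriv]

lemma mul_Sfun (z : ℂ) : z * Sfun z = Complex.sin (π / 2 * z) := by
  have := sub_smul_dslope (fun z : ℂ => Complex.sin (π / 2 * z)) 0 z
  simpa [Sfun] using this

lemma Sfun_ne {z : ℂ} (h1 : -2 < z.re) (h2 : z.re < 2) : Sfun z ≠ 0 := by
  intro h
  by_cases hz : z = 0
  · rw [hz, Sfun_zero] at h
    have : (π : ℂ) ≠ 0 := by exact_mod_cast Real.pi_ne_zero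
    simp [this] at h
  · have hs : Complex.sin (π / 2 * z) = 0 := by rw [← mul_Sfun, h, mul_zero]
    rw [Complex.sin_eq_zero_iff] at hs
    obtain ⟨k, hk⟩ := hs
    have hp : (π : ℂ) ≠ 0 := by exact_mod_cast Real.pi_ne_zero
    have e : z = 2 * k := by
      apply mul_left_cancel₀ hp
      linear_combination 2 * hk
    rw [e] at h1 h2
    simp at h1 h2
    have h3 : (-1 : ℝ) < k := by linarith
    have h4 : (k : ℝ) < 1 := by linarith
    have h3' : (-1 : ℤ) < k := by exact_mod_cast h3
    have h4' : k < 1 := by exact_mod_cast h4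
    have : k = 0 := by omega
    apply hz; rw [e, this]; simp

lemma cos_ne {z : ℂ} (h1 : -1 < z.re) (h2 : z.re < 1) : Complex.cos (π / 2 * z) ≠ 0 := by
  intro h
  rw [Complex.cos_eq_zero_iff] at h
  obtain ⟨k, hk⟩ := h
  have hp : (π : ℂ) ≠ 0 := by exact_mod_cast Real.pi_ne_zero
  have e : z = 2 * k + 1 := by
    apply mul_left_cancel₀ hp
    linear_combination 2 * hk
  rw [e] at h1 h2
  simp at h1 h2
  have h3 : (-1 : ℝ) < k := by linarith
  have h4 : (k : ℝ) < 0 := by linarith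
  have h3' : (-1 : ℤ) < k := by exact_mod_cast h3
  have h4' : k < 0 := by exact_mod_cast h4
  omega

lemma norm_sin_ge (z : ℂ) : |Real.sinh z.im| ≤ ‖Complex.sin z‖ := by
  have h : ‖Complex.sin z‖ ^ 2 = Real.sin z.re ^ 2 + Real.sinh z.im ^ 2 := by
    have e : Complex.sin z = ((Real.sin z.re * Real.cosh z.im : ℝ) : ℂ) +
        ((Real.cos z.re * Real.sinh z.im : ℝ) : ℂ) * I := by
      rw [Complex.sin_eq]; push_cast; ring
    rw [← Complex.normSq_eq_norm_sq, e, Complex.normSq_add_mul_I]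
    have h1 := Real.cosh_sq z.im
    have h2 := Real.sin_sq_add_cos_sq z.re
    rw [mul_pow, mul_pow]
    linear_combination Real.sin z.re ^ 2 * h1 + Real.sinh z.im ^ 2 * h2
  refine abs_le_of_sq_le_sq ?_ (norm_nonneg _) |> fun h => h
  nlinarith [sq_nonneg (Real.sin z.re)]

lemma norm_cos_ge (z : ℂ) : |Real.sinh z.im| ≤ ‖Complex.cos z‖ := by
  have := norm_sin_ge (z + π / 2)
  rw [Complex.sin_add_pi_div_two] at this
  have e : (z + (π : ℂ) / 2).im = z.im := by
    have : ((π : ℂ) / 2) = ((π / 2 : ℝ) : ℂ) := by push_cast; ring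
    rw [this]; simp
  rwa [e] at this

lemma sinh_ge {y : ℝ} (hy : 1 ≤ |y|) : Real.exp |y| / 4 ≤ |Real.sinh y| := by
  have h : |Real.sinh y| = Real.sinh |y| := by
    rw [Real.abs_sinh]
  rw [h, Real.sinh_eq]
  have h1 : Real.exp (-|y|) ≤ 1 := Real.exp_le_one_iff.mpr (by linarith)
  have h2 : 2 ≤ Real.exp |y| := by
    have := Real.add_one_le_exp |y|
    linarith
  linarith

/-- the trigonometric denominator -/
noncomputable def den (s w : ℂ) : ℂ :=
  2 * Complex.cos (π / 2 * (w + s / 2)) * Complex.sin (π / 2 * (w - s / 2))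

lemma den_bound (s : ℂ) : ∃ C : ℝ, 0 < C ∧ ∀ T : ℝ, |s.im| + 1 ≤ |T| → ∀ u : ℝ,
    ‖1 / den s (u + T * I)‖ ≤ C * Real.exp (-(π * |T|)) := by
  refine ⟨8 * Real.exp (π * |s.im|), by positivity, fun T hT u => ?_⟩
  have him : ∀ ε : ℝ, |ε| ≤ |s.im| / 2 → ∀ z : ℂ, z.im = π / 2 * (T + ε) →
      Real.exp (π / 2 * (|T| - |s.im|)) / 4 ≤ |Real.sinh z.im| := by
    intro ε hε z hz
    have h1 : |T| - |s.im| / 2 ≤ |T + ε| := by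
      have := abs_sub_abs_le_abs_sub T (-ε)
      rw [abs_neg, sub_neg_eq_add] at this
      linarith
    have h2 : |z.im| = π / 2 * |T + ε| := by
      rw [hz, abs_mul, abs_of_pos (by positivity)]
    have hpi := Real.pi_gt_three
    have h0 := abs_nonneg s.im
    have h3 : 1 ≤ |z.im| := by
      rw [h2]; nlinarith
    refine le_trans ?_ (sinh_ge h3)
    have : Real.exp (π / 2 * (|T| - |s.im|)) ≤ Real.exp |z.im| := by
      apply Real.exp_le_exp.mpr
      rw [h2]
      apply mul_le_mul_of_nonneg_left _ (by positivity)
      linarith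
    linarith
  have e : (π : ℂ) / 2 = ((π / 2 : ℝ) : ℂ) := by push_cast; ring
  have es : (s / 2).im = s.im / 2 := by simp
  have b1 := (him (s.im / 2) (by rw [abs_div]; simp) (π / 2 * ((u + T * I) + s / 2)) (by
    rw [e, Complex.im_ofReal_mul]; simp)).trans (norm_cos_ge _)
  have b2 := (him (-(s.im / 2)) (by rw [abs_neg, abs_div]; simp) (π / 2 * ((u + T * I) - s / 2)) (by
    rw [e, Complex.im_ofReal_mul]; simp; ring)).trans (norm_sin_ge _)
  unfold den
  rw [norm_div, norm_one, norm_mul, norm_mul]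
  simp only [Complex.norm_ofNat]
  set E := Real.exp (π / 2 * (|T| - |s.im|)) with hE
  have hE0 : 0 < E := Real.exp_pos _
  have hEE : E * E * (8 * Real.exp (π * |s.im|) * Real.exp (-(π * |T|))) = 8 := by
    rw [hE]
    have : Real.exp (π / 2 * (|T| - |s.im|)) * Real.exp (π / 2 * (|T| - |s.im|)) *
      (8 * Real.exp (π * |s.im|) * Real.exp (-(π * |T|))) = 8 * (Real.exp (π / 2 * (|T| - |s.im|)) * Real.exp (π / 2 * (|T| - |s.im|)) *
      Real.exp (π * |s.im|) * Real.exp (-(π * |T|))) := by ring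
    rw [this, ← Real.exp_add, ← Real.exp_add, ← Real.exp_add]
    ring_nf
    simp
  have hb : E * E / 8 ≤ 2 * ‖Complex.cos (π / 2 * (u + T * I + s / 2))‖ *
      ‖Complex.sin (π / 2 * (u + T * I - s / 2))‖ := by
    have := mul_le_mul b1 b2 (by positivity) (norm_nonneg _)
    nlinarith
  refine (one_div_le_one_div_of_le (by positivity) hb).trans (le_of_eq ?_)
  rw [one_div_div, div_eq_iff (by positivity)]
  linarith [hEE]


/-! ### The kernel integral -/

lemma norm_cpow_line {y : ℝ} (hy : 0 < y) (u T : ℝ) :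
    ‖(y : ℂ) ^ (-((u : ℂ) + T * I))‖ = y ^ (-u) := by
  rw [Complex.norm_cpow_eq_rpow_re_of_pos hy]
  simp

lemma rpow_le_add {y : ℝ} (hy : 0 < y) {a b u : ℝ} (h1 : a ≤ u) (h2 : u ≤ b) :
    y ^ (-u) ≤ y ^ (-a) + y ^ (-b) := by
  rcases le_total 1 y with h | h
  · have := Real.rpow_le_rpow_of_exponent_le h (neg_le_neg h1)
    have := Real.rpow_pos_of_pos hy (-b)
    linarith
  · have := Real.rpow_le_rpow_of_exponent_ge hy h (neg_le_neg h2)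
    have := Real.rpow_pos_of_pos hy (-a)
    linarith

lemma den_eq1 (s w : ℂ) : den s w = -2 * Complex.sin (π / 2 * (w - (-1 - s / 2))) *
    Complex.sin (π / 2 * (w - (s / 2 - 2))) := by
  have e1 : (π : ℂ) / 2 * (w - (-1 - s / 2)) = π / 2 * (w + s / 2) + π / 2 := by ring
  have e2 : (π : ℂ) / 2 * (w - (s / 2 - 2)) = π / 2 * (w - s / 2) + π := by ring
  rw [e1, e2, Complex.sin_add_pi_div_two, Complex.sin_add_pi, den]
  ring

lemma den_sub_two (s w : ℂ) : den s (w - 2) = den s w := by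
  have e1 : (π : ℂ) / 2 * (w - 2 + s / 2) = π / 2 * (w + s / 2) - π := by ring
  have e2 : (π : ℂ) / 2 * (w - 2 - s / 2) = π / 2 * (w - s / 2) - π := by ring
  rw [den, den, e1, e2, Complex.sin_sub_pi, Complex.cos_sub_pi]
  ring

lemma pi_ne : (π : ℂ) ≠ 0 := by exact_mod_cast Real.pi_ne_zero

lemma exp_pi_le (T : ℝ) : Real.exp (-(π * |T|)) ≤ Real.exp (-|T|) := by
  apply Real.exp_le_exp.mpr
  have := Real.pi_gt_three
  nlinarith [abs_nonneg T]

lemma kernelJ (s : ℂ) (hs1 : -1 < s.re) (hs2 : s.re < 1) {y : ℝ} (hy : 0 < y) :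
    Integrable (fun τ : ℝ => (y : ℂ) ^ (-(((-1 / 2 : ℝ) : ℂ) + τ * I)) /
      den s (((-1 / 2 : ℝ) : ℂ) + τ * I)) ∧
    (1 - (y : ℂ) ^ 2) * (∫ τ : ℝ, (y : ℂ) ^ (-(((-1 / 2 : ℝ) : ℂ) + τ * I)) /
      den s (((-1 / 2 : ℝ) : ℂ) + τ * I)) =
      2 * ((y : ℂ) ^ (2 - s / 2) - (y : ℂ) ^ (1 + s / 2)) / Complex.cos (π * s / 2) := by
  obtain ⟨C, hC, hden⟩ := den_bound s
  have hy' : (y : ℂ) ≠ 0 := by exact_mod_cast hy.ne'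
  set p : ℂ := -1 - s / 2 with hp
  set q : ℂ := s / 2 - 2 with hq
  have hpre : p.re = -1 - s.re / 2 := by simp [hp]
  have hqre : q.re = s.re / 2 - 2 := by simp [hq]
  have hpq : p - q = 1 - s := by rw [hp, hq]; ring
  have hs : 1 - s ≠ 0 := by
    intro h
    have : (1 - s).re = 0 := by rw [h]; simp
    simp at this; linarith
  have main := contour_shift_simple (-5 / 2) (-1 / 2) p q (by
      rw [← sub_ne_zero, hpq]; exact hs)
    (by rw [hpre]; linarith) (by rw [hpre]; linarith) (by rw [hqre]; linarith)
    (by rw [hqre]; linarith)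
    (fun w => -(y : ℂ) ^ (-w) / (2 * Sfun (w - p) * Sfun (w - q)))
    (fun w => (y : ℂ) ^ (-w) / den s w)
    ({w : ℂ | -2 < (w - p).re} ∩ {w : ℂ | (w - p).re < 2} ∩
      ({w : ℂ | -2 < (w - q).re} ∩ {w : ℂ | (w - q).re < 2}))
    (by
      refine IsOpen.inter (IsOpen.inter ?_ ?_) (IsOpen.inter ?_ ?_)
      · exact isOpen_lt (by fun_prop) (by fun_prop)
      · exact isOpen_lt (by fun_prop) (by fun_prop)
      · exact isOpen_lt (by fun_prop) (by fun_prop)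
      · exact isOpen_lt (by fun_prop) (by fun_prop))
    (by
      intro w h1 h2
      simp only [Set.mem_inter_iff, Set.mem_ofPred_eq, Complex.sub_re, hpre, hqre]
      refine ⟨⟨?_, ?_⟩, ?_, ?_⟩ <;> linarith)
    (by
      rintro w ⟨⟨h1, h2⟩, h3, h4⟩
      refine DifferentiableAt.differentiableWithinAt ?_
      refine DifferentiableAt.div ?_ ?_ ?_
      · refine DifferentiableAt.neg ?_
        exact (differentiableAt_id.neg).const_cpow (Or.inl hy')
      · refine DifferentiableAt.mul (DifferentiableAt.mul (by fun_prop) ?_) ?_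
        · exact (Sfun_diff _).comp w (by fun_prop)
        · exact (Sfun_diff _).comp w (by fun_prop)
      · exact mul_ne_zero (mul_ne_zero two_ne_zero (Sfun_ne h1 h2)) (Sfun_ne h3 h4))
    (by
      intro w h1 h2 h3 h4
      have h3' := sub_ne_zero.mpr h3
      have h4' := sub_ne_zero.mpr h4
      have k1 : Sfun (w - p) ≠ 0 := by
        apply Sfun_ne <;> rw [Complex.sub_re, hpre] <;> linarith
      have k2 : Sfun (w - q) ≠ 0 := by
        apply Sfun_ne <;> rw [Complex.sub_re, hqre] <;> linarith
      rw [den_eq1, ← mul_Sfun, ← mul_Sfun]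
      simp only [← hp, ← hq]
      field_simp)
    ((y ^ (-(-5 / 2) : ℝ) + y ^ (-(-1 / 2) : ℝ)) * C) (|s.im| + 1)
    (by
      intro T hT u hu1 hu2
      rw [div_eq_mul_one_div, norm_mul, norm_cpow_line hy, mul_assoc]
      refine mul_le_mul (rpow_le_add hy hu1 hu2) ?_ (norm_nonneg _) (by positivity)
      exact (hden T hT u).trans (mul_le_mul_of_nonneg_left (exp_pi_le T) hC.le))
  obtain ⟨-, ib, hmain⟩ := main
  refine ⟨ib, ?_⟩
  have per : ∀ τ : ℝ, (y : ℂ) ^ (-(((-5 / 2 : ℝ) : ℂ) + τ * I)) / den s (((-5 / 2 : ℝ) : ℂ) + τ * I)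
      = (y : ℂ) ^ 2 * ((y : ℂ) ^ (-(((-1 / 2 : ℝ) : ℂ) + τ * I)) /
          den s (((-1 / 2 : ℝ) : ℂ) + τ * I)) := by
    intro τ
    have e : (((-5 / 2 : ℝ) : ℂ) + τ * I) = (((-1 / 2 : ℝ) : ℂ) + τ * I) - 2 := by
      push_cast; ring
    rw [e, den_sub_two, neg_sub, sub_eq_add_neg, Complex.cpow_add _ _ hy']
    norm_cast
    ring
  simp only [per] at hmain
  rw [integral_const_mul] at hmain
  have c0 : Complex.cos (π * s / 2) ≠ 0 := by
    have := cos_ne (z := s) hs1 hs2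
    rwa [show (π : ℂ) * s / 2 = π / 2 * s by ring]
  have r1 : -(y : ℂ) ^ (-p) / (2 * Sfun (p - p) * Sfun (p - q)) / (p - q) =
      -(y : ℂ) ^ (1 + s / 2) / (π * Complex.cos (π * s / 2)) := by
    rw [sub_self, Sfun_zero, div_div]
    have : 2 * ((π : ℂ) / 2) * Sfun (p - q) * (p - q) = π * Complex.cos (π * s / 2) := by
      rw [mul_assoc, mul_comm (Sfun _), mul_Sfun, hpq]
      rw [show (π : ℂ) / 2 * (1 - s) = π / 2 - π * s / 2 by ring, Complex.sin_pi_div_two_sub]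
      ring
    rw [this, hp]
    congr 3; ring
  have r2 : -(y : ℂ) ^ (-q) / (2 * Sfun (q - p) * Sfun (q - q)) / (q - p) =
      (y : ℂ) ^ (2 - s / 2) / (π * Complex.cos (π * s / 2)) := by
    rw [sub_self, Sfun_zero, div_div]
    have : 2 * Sfun (q - p) * ((π : ℂ) / 2) * (q - p) = -(π * Complex.cos (π * s / 2)) := by
      have : 2 * Sfun (q - p) * ((π : ℂ) / 2) * (q - p) = π * ((q - p) * Sfun (q - p)) := by ring
      rw [this, mul_Sfun, ← neg_sub p q, hpq]
      rw [show (π : ℂ) / 2 * -(1 - s) = -(π / 2 - π * s / 2) by ring, Complex.sin_neg,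
        Complex.sin_pi_div_two_sub]
      ring
    rw [this, hq, neg_div_neg_eq]
    congr 2; ring
  rw [r1, r2] at hmain
  have h2 : (2 : ℂ) * π * (-(y : ℂ) ^ (1 + s / 2) / (π * Complex.cos (π * s / 2)) +
      (y : ℂ) ^ (2 - s / 2) / (π * Complex.cos (π * s / 2))) =
      2 * ((y : ℂ) ^ (2 - s / 2) - (y : ℂ) ^ (1 + s / 2)) / Complex.cos (π * s / 2) := by
    have := pi_ne
    field_simp
    ring
  rw [← h2, ← hmain]
  ring


/-! ### The Mellin inversion of `fRam`: contour shift -/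

/-- The Mellin transform of `fRam`. -/
noncomputable def FF (s w : ℂ) : ℂ :=
  riemannZeta (1 - w + s / 2) * riemannZeta (1 - w - s / 2) / den s w

lemma pow_four_le {y : ℝ} (hy : 0 ≤ y) : y ^ 4 ≤ 24 * Real.exp y := by
  have := Real.pow_div_factorial_le_exp y hy 4
  have e : ((Nat.factorial 4 : ℕ) : ℝ) = 24 := by norm_num [Nat.factorial]
  rw [e] at this
  linarith

lemma zeta_bound {z : ℂ} {δ : ℝ} (hδ : 0 < δ) (hz : δ ≤ z.re) (him : 1 ≤ |z.im|) :
    ‖riemannZeta z‖ ≤ (1 + 1 / δ) * (1 + ‖z‖) ^ 2 := by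
  have h1 : (1 : ℝ) ≤ ‖z - 1‖ := by
    refine him.trans ?_
    have := Complex.abs_im_le_norm (z - 1)
    simpa using this
  have hne : z ≠ 1 := by
    rintro rfl
    simp at h1; linarith
  rw [riemannZeta_eq_inv_sub_mul hne, norm_mul, norm_inv]
  refine le_trans ?_ (zeta1_bound hδ hz)
  have : ‖z - 1‖⁻¹ ≤ 1 := inv_le_one_of_one_le₀ h1
  nlinarith [norm_nonneg (riemannZeta₁ z)]

lemma FF_bound (s : ℂ) (hs1 : -1 < s.re) (hs2 : s.re < 1) : ∃ C : ℝ, 0 < C ∧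
    ∀ T : ℝ, |s.im| + 1 ≤ |T| → ∀ u : ℝ, -1 / 2 ≤ u → u ≤ 1 / 2 →
    ‖FF s (u + T * I)‖ ≤ C * Real.exp (-|T|) := by
  obtain ⟨C, hC, hden⟩ := den_bound s
  set δ : ℝ := 1 / 2 - |s.re| / 2 with hδ
  have hδ0 : 0 < δ := by
    have : |s.re| < 1 := abs_lt.mpr ⟨hs1, hs2⟩
    rw [hδ]; linarith
  have hr1 := le_abs_self s.re
  have hr2 := neg_abs_le s.re
  have hi1 := le_abs_self s.im
  have hi2 := neg_abs_le s.im
  refine ⟨(1 + 1 / δ) ^ 2 * (24 * Real.exp (3 + ‖s‖)) * C, by positivity, ?_⟩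
  intro T hT u hu1 hu2
  have hn : ∀ z : ℂ, δ ≤ z.re → 1 ≤ |z.im| → ‖z‖ ≤ 2 + ‖s‖ + |T| →
      ‖riemannZeta z‖ ≤ (1 + 1 / δ) * (3 + ‖s‖ + |T|) ^ 2 := by
    intro z h1 h2 h3
    refine (zeta_bound hδ0 h1 h2).trans ?_
    refine mul_le_mul_of_nonneg_left ?_ (by positivity)
    refine pow_le_pow_left₀ (by positivity) ?_ 2
    linarith
  have huabs : |u| ≤ 1 / 2 := abs_le.mpr ⟨by linarith, hu2⟩
  have key : ∀ v : ℂ, ‖v‖ ≤ ‖s‖ → ‖(1 : ℂ) - (u + T * I) + v‖ ≤ 2 + ‖s‖ + |T| := by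
    intro v hv
    have h1 : ‖(1 : ℂ) - (u + T * I) + v‖ ≤ ‖(1 : ℂ) - (u + T * I)‖ + ‖v‖ := norm_add_le _ _
    have h2 : ‖(1 : ℂ) - (u + T * I)‖ ≤ ‖(1 : ℂ)‖ + ‖(u : ℂ) + T * I‖ := norm_sub_le _ _
    have h3 : ‖(u : ℂ) + T * I‖ ≤ ‖(u : ℂ)‖ + ‖(T : ℂ) * I‖ := norm_add_le _ _
    simp at h2 h3
    linarith
  have hs2n : ‖s / 2‖ ≤ ‖s‖ := by
    rw [norm_div]; simp
  have absT : ∀ ε : ℝ, |ε| ≤ |s.im| / 2 → 1 ≤ |-T + ε| := by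
    intro ε hε
    have := abs_sub_abs_le_abs_sub (-T) (-ε)
    rw [abs_neg, abs_neg, sub_neg_eq_add] at this
    have := abs_nonneg s.im
    linarith
  have z1 := hn (1 - (u + T * I) + s / 2) (by simp; linarith)
    (by
      have e : ((1 : ℂ) - (u + T * I) + s / 2).im = -T + s.im / 2 := by simp
      rw [e]; apply absT; rw [abs_div]; simp)
    (key _ hs2n)
  have z2 := hn (1 - (u + T * I) - s / 2) (by simp; linarith)
    (by
      have e : ((1 : ℂ) - (u + T * I) - s / 2).im = -T + -(s.im / 2) := by simp; ring
      rw [e]; apply absT; rw [abs_neg, abs_div]; simp)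
    (by
      rw [sub_eq_add_neg _ (s / 2)]; exact key _ (by rw [norm_neg]; exact hs2n))
  have hprod := mul_le_mul z1 z2 (norm_nonneg _) (by positivity)
  have hd := hden T hT u
  rw [FF, div_eq_mul_one_div, norm_mul, norm_mul]
  refine (mul_le_mul hprod hd (norm_nonneg _) (by positivity)).trans ?_
  have p4 := pow_four_le (y := 3 + ‖s‖ + |T|) (by positivity)
  have ee : Real.exp (3 + ‖s‖ + |T|) * Real.exp (-(π * |T|)) ≤
      Real.exp (3 + ‖s‖) * Real.exp (-|T|) := by
    rw [← Real.exp_add, ← Real.exp_add]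
    apply Real.exp_le_exp.mpr
    have := Real.pi_gt_three
    nlinarith [abs_nonneg T]
  calc (1 + 1 / δ) * (3 + ‖s‖ + |T|) ^ 2 * ((1 + 1 / δ) * (3 + ‖s‖ + |T|) ^ 2) *
        (C * Real.exp (-(π * |T|)))
      = (1 + 1 / δ) ^ 2 * C * ((3 + ‖s‖ + |T|) ^ 4 * Real.exp (-(π * |T|))) := by ring
    _ ≤ (1 + 1 / δ) ^ 2 * C * (24 * Real.exp (3 + ‖s‖ + |T|) * Real.exp (-(π * |T|))) := by
        gcongr
    _ = (1 + 1 / δ) ^ 2 * C * 24 * (Real.exp (3 + ‖s‖ + |T|) * Real.exp (-(π * |T|))) := by ring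
    _ ≤ (1 + 1 / δ) ^ 2 * C * 24 * (Real.exp (3 + ‖s‖) * Real.exp (-|T|)) := by gcongr
    _ = _ := by ring

lemma Sfun_neg (z : ℂ) : Sfun (-z) = Sfun z := by
  by_cases hz : z = 0
  · rw [hz, neg_zero]
  · apply mul_left_cancel₀ hz
    have h1 := mul_Sfun (-z)
    rw [mul_neg, Complex.sin_neg, ← mul_Sfun z] at h1
    linear_combination -h1

lemma Sfun_hasDeriv_zero : HasDerivAt Sfun 0 0 := by
  have h := (Sfun_diff 0).hasDerivAt
  have h2 : HasDerivAt (fun z : ℂ => Sfun (-z)) (-deriv Sfun 0) 0 := by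
    have h' : HasDerivAt Sfun (deriv Sfun 0) (-(0 : ℂ)) := by rw [neg_zero]; exact h
    have := HasDerivAt.comp (h := fun z : ℂ => -z) (0 : ℂ) h' (hasDerivAt_neg (0 : ℂ))
    rw [mul_neg_one] at this
    exact this
  have e : (fun z : ℂ => Sfun (-z)) = Sfun := by ext z; exact Sfun_neg z
  rw [e] at h2
  have := h.unique h2
  have h0 : deriv Sfun 0 = 0 := by
    linear_combination this / 2
  rwa [h0] at h

/-- the holomorphic factor -/
noncomputable def AA (s : ℂ) (x : ℝ) (w : ℂ) : ℂ :=
  (x : ℂ) ^ (-w) * (riemannZeta₁ (1 - w + s / 2) * riemannZeta₁ (1 - w - s / 2)) /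
    (2 * (Complex.cos (π / 2 * (w + s / 2)) * Sfun (w - s / 2)))

lemma zeta1_deriv {s : ℂ} (hs0 : s ≠ 0) :
    deriv riemannZeta₁ (1 - s) = riemannZeta (1 - s) - s * deriv riemannZeta (1 - s) := by
  have hne : 1 - s ≠ 1 := by simpa using hs0
  have hz := (differentiableAt_riemannZeta hne).hasDerivAt
  have h1 : HasDerivAt (fun z : ℂ => (z - 1) * riemannZeta z)
      (1 * riemannZeta (1 - s) + (1 - s - 1) * deriv riemannZeta (1 - s)) (1 - s) :=
    ((hasDerivAt_id (1 - s)).sub_const 1).mul hz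
  have h2 : riemannZeta₁ =ᶠ[nhds (1 - s)] fun z : ℂ => (z - 1) * riemannZeta z := by
    filter_upwards [isOpen_ne.mem_nhds hne] with z hz
    rw [riemannZeta_eq_inv_sub_mul hz, mul_inv_cancel_left₀ (sub_ne_zero.mpr hz)]
  rw [h2.deriv_eq, h1.deriv]
  ring

lemma AA_deriv {s : ℂ} (hs1 : -1 < s.re) (hs2 : s.re < 1) {x : ℝ} (hx : 0 < x) :
    deriv (AA s x) (s / 2) = (x : ℂ) ^ (-(s / 2)) / (π * Complex.cos (π * s / 2)) *
      (-(Real.log x : ℂ) * riemannZeta₁ (1 - s)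
        - (Real.eulerMascheroniConstant : ℂ) * riemannZeta₁ (1 - s)
        - deriv riemannZeta₁ (1 - s)
        + π / 2 * Complex.tan (π * s / 2) * riemannZeta₁ (1 - s)) := by
  have hx' : (x : ℂ) ≠ 0 := by exact_mod_cast hx.ne'
  have c0 : Complex.cos (π * s / 2) ≠ 0 := by
    have := cos_ne (z := s) hs1 hs2
    rwa [show (π : ℂ) * s / 2 = π / 2 * s by ring]
  have d1 : HasDerivAt (fun w : ℂ => (x : ℂ) ^ (-w))
      ((x : ℂ) ^ (-(s / 2)) * Complex.log x * (-1)) (s / 2) :=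
    (hasDerivAt_neg (s / 2)).const_cpow (Or.inl hx')
  have d2 : HasDerivAt (fun w : ℂ => riemannZeta₁ (1 - w + s / 2))
      (deriv riemannZeta₁ 1 * (-1)) (s / 2) := by
    have h : HasDerivAt riemannZeta₁ (deriv riemannZeta₁ 1) (1 - s / 2 + s / 2) := by
      rw [sub_add_cancel]; exact (differentiable_riemannZeta₁ 1).hasDerivAt
    exact HasDerivAt.comp (h := fun w : ℂ => 1 - w + s / 2) (s / 2) h (((hasDerivAt_id (s / 2)).const_sub 1).add_const (s / 2))
  have d3 : HasDerivAt (fun w : ℂ => riemannZeta₁ (1 - w - s / 2))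
      (deriv riemannZeta₁ (1 - s) * (-1)) (s / 2) := by
    have h : HasDerivAt riemannZeta₁ (deriv riemannZeta₁ (1 - s)) (1 - s / 2 - s / 2) := by
      rw [show 1 - s / 2 - s / 2 = 1 - s by ring]
      exact (differentiable_riemannZeta₁ _).hasDerivAt
    exact HasDerivAt.comp (h := fun w : ℂ => 1 - w - s / 2) (s / 2) h (((hasDerivAt_id (s / 2)).const_sub 1).sub_const (s / 2))
  have d4 : HasDerivAt (fun w : ℂ => Complex.cos (π / 2 * (w + s / 2)))
      (-Complex.sin (π / 2 * (s / 2 + s / 2)) * (π / 2 * 1)) (s / 2) :=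
    (((hasDerivAt_id (s / 2)).add_const (s / 2)).const_mul (π / 2 : ℂ)).ccos
  have d5 : HasDerivAt (fun w : ℂ => Sfun (w - s / 2)) (0 * 1) (s / 2) := by
    have h : HasDerivAt Sfun 0 (s / 2 - s / 2) := by rw [sub_self]; exact Sfun_hasDeriv_zero
    exact HasDerivAt.comp (h := fun w : ℂ => w - s / 2) (s / 2) h ((hasDerivAt_id (s / 2)).sub_const (s / 2))
  have ec : (π : ℂ) / 2 * (s / 2 + s / 2) = π * s / 2 := by ring
  have hden : 2 * (Complex.cos (π / 2 * (s / 2 + s / 2)) * Sfun (s / 2 - s / 2)) ≠ 0 := by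
    rw [ec, sub_self, Sfun_zero]
    have := pi_ne
    simp [c0]
  have D := (d1.mul (d2.mul d3)).div ((d4.mul d5).const_mul 2) hden
  have e : deriv (AA s x) (s / 2) = _ := D.deriv
  rw [e]
  simp only [Pi.mul_apply]
  rw [ec, sub_self, Sfun_zero, show (1 : ℂ) - s / 2 + s / 2 = 1 by ring,
    show 1 - s / 2 - s / 2 = 1 - s by ring, riemannZeta₁_one, deriv_riemannZeta₁_one,
    Complex.tan_eq_sin_div_cos, Complex.ofReal_log hx.le]
  have hpi := pi_ne
  clear D e hden d1 d2 d3 d4 d5 ec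
  generalize Complex.cos (π * s / 2) = c at *
  generalize Complex.sin (π * s / 2) = c' at *
  generalize (x : ℂ) ^ (-(s / 2)) = X at *
  field_simp
  ring

/-- the residue terms of `fRam` -/
noncomputable def fRes (x : ℝ) (s : ℂ) : ℂ :=
  (x : ℂ) ^ (s / 2) * riemannZeta (1 + s) / (2 * Complex.sin ((π : ℂ) * s / 2))
  - (2 : ℂ) ^ (-s) * (π : ℂ) ^ (-1 - s) * (x : ℂ) ^ (-s / 2) *
      (Complex.Gamma s * riemannZeta s *
          ((π : ℂ) * Complex.tan ((π : ℂ) * s / 2) -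
            2 * ((Real.eulerMascheroniConstant : ℂ) + (Real.log x : ℂ)))
        - ((2 * π : ℝ) : ℂ) ^ s * deriv riemannZeta (1 - s) /
            Complex.cos ((π : ℂ) * s / 2))

lemma AA_q {s : ℂ} (hs0 : s ≠ 0) {x : ℝ} :
    AA s x (-s / 2) / s ^ 2 =
      (x : ℂ) ^ (s / 2) * riemannZeta (1 + s) / (2 * Complex.sin ((π : ℂ) * s / 2)) := by
  have hne : 1 + s ≠ 1 := by simpa using hs0
  rw [riemannZeta_eq_inv_sub_mul hne, AA]
  rw [show (π : ℂ) * s / 2 = π / 2 * s by ring, ← mul_Sfun,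
    show -s / 2 - s / 2 = -s by ring, Sfun_neg, show -s / 2 + s / 2 = 0 by ring,
    show 1 - -s / 2 + s / 2 = 1 + s by ring, show 1 - -s / 2 - s / 2 = 1 by ring,
    show -(-s / 2) = s / 2 by ring, show 1 + s - 1 = s by ring, riemannZeta₁_one]
  simp
  field_simp

lemma AA_p {s : ℂ} (hs0 : s ≠ 0) (hs1 : -1 < s.re) (hs2 : s.re < 1) {x : ℝ} (hx : 0 < x) :
    deriv (AA s x) (s / 2) / s - AA s x (s / 2) / s ^ 2 =
     - ((2 : ℂ) ^ (-s) * (π : ℂ) ^ (-1 - s) * (x : ℂ) ^ (-s / 2) *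
      (Complex.Gamma s * riemannZeta s *
          ((π : ℂ) * Complex.tan ((π : ℂ) * s / 2) -
            2 * ((Real.eulerMascheroniConstant : ℂ) + (Real.log x : ℂ)))
        - ((2 * π : ℝ) : ℂ) ^ s * deriv riemannZeta (1 - s) /
            Complex.cos ((π : ℂ) * s / 2))) := by
  have hpi := pi_ne
  have c0 : Complex.cos (π * s / 2) ≠ 0 := by
    have := cos_ne (z := s) hs1 hs2
    rwa [show (π : ℂ) * s / 2 = π / 2 * s by ring]
  have hA : AA s x (s / 2) = (x : ℂ) ^ (-(s / 2)) / (π * Complex.cos (π * s / 2)) *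
      riemannZeta₁ (1 - s) := by
    rw [AA, show (π : ℂ) / 2 * (s / 2 + s / 2) = π * s / 2 by ring, sub_self, Sfun_zero,
      show (1 : ℂ) - s / 2 + s / 2 = 1 by ring, show 1 - s / 2 - s / 2 = 1 - s by ring,
      riemannZeta₁_one]
    field_simp
  have hne : 1 - s ≠ 1 := by simpa using hs0
  have hz1 : riemannZeta₁ (1 - s) = -s * riemannZeta (1 - s) := by
    rw [riemannZeta_eq_inv_sub_mul hne, show 1 - s - 1 = -s by ring,
      mul_inv_cancel_left₀ (neg_ne_zero.mpr hs0)]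
  rw [AA_deriv hs1 hs2 hx, hA, zeta1_deriv hs0, hz1]
  have hfe := riemannZeta_one_sub (s := s) (by
    intro n h
    rcases n with _ | n
    · simp at h; exact hs0 h
    · rw [h] at hs1
      simp at hs1
      have : (0 : ℝ) ≤ n := n.cast_nonneg
      linarith) (by rintro rfl; simp at hs2)
  have e2 : (2 : ℂ) ^ (-s) * (π : ℂ) ^ (-1 - s) = (2 * π : ℂ) ^ (-s) / π := by
    have h : (2 * π : ℂ) ^ (-s) = (2 : ℂ) ^ (-s) * (π : ℂ) ^ (-s) := by
      have := Complex.mul_cpow_ofReal_nonneg (a := 2) (b := π) (by norm_num) Real.pi_pos.le (-s)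
      simpa using this
    rw [h, show -1 - s = -s - 1 by ring, Complex.cpow_sub _ _ hpi, Complex.cpow_one]
    ring
  have h2pi : (2 * π : ℂ) ≠ 0 := mul_ne_zero two_ne_zero hpi
  have e3 : ((2 * π : ℝ) : ℂ) ^ s = ((2 * π : ℂ) ^ (-s))⁻¹ := by
    rw [Complex.cpow_neg, inv_inv]; push_cast; rfl
  have h0 : (2 * π : ℂ) ^ (-s) ≠ 0 := by simp [Complex.cpow_eq_zero_iff, h2pi]
  rw [e2, e3, hfe, show -(s / 2) = -s / 2 by ring]
  clear hA hz1 hfe e2 e3 h2pi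
  generalize Complex.cos (π * s / 2) = c at *
  generalize Complex.tan (π * s / 2) = c' at *
  generalize (x : ℂ) ^ (-s / 2) = X at *
  generalize (2 * π : ℂ) ^ (-s) = Y at *
  field_simp
  ring

lemma FF_shift {s : ℂ} (hs0 : s ≠ 0) (hs1 : -1 < s.re) (hs2 : s.re < 1) {x : ℝ} (hx : 0 < x) :
    Integrable (fun τ : ℝ => FF s (((-1 / 2 : ℝ) : ℂ) + τ * I) *
      (x : ℂ) ^ (-(((-1 / 2 : ℝ) : ℂ) + τ * I))) ∧
    Integrable (fun τ : ℝ => FF s (((1 / 2 : ℝ) : ℂ) + τ * I) *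
      (x : ℂ) ^ (-(((1 / 2 : ℝ) : ℂ) + τ * I))) ∧
    (∫ τ : ℝ, FF s (((1 / 2 : ℝ) : ℂ) + τ * I) * (x : ℂ) ^ (-(((1 / 2 : ℝ) : ℂ) + τ * I))) -
    (∫ τ : ℝ, FF s (((-1 / 2 : ℝ) : ℂ) + τ * I) * (x : ℂ) ^ (-(((-1 / 2 : ℝ) : ℂ) + τ * I))) =
      2 * π * fRes x s := by
  obtain ⟨C, hC, hF⟩ := FF_bound s hs1 hs2
  have hx' : (x : ℂ) ≠ 0 := by exact_mod_cast hx.ne'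
  have ppq : s / 2 - -s / 2 = s := by ring
  have hpre : (s / 2).re = s.re / 2 := by simp
  have hqre : (-s / 2).re = - s.re / 2 := by simp
  have main := contour_shift_double (-1 / 2) (1 / 2) (s / 2) (-s / 2) (by
      rw [← sub_ne_zero, ppq]; exact hs0)
    (by rw [hpre]; linarith) (by rw [hpre]; linarith) (by rw [hqre]; linarith)
    (by rw [hqre]; linarith)
    (AA s x) (fun w => FF s w * (x : ℂ) ^ (-w))
    ({w : ℂ | -1 < (w + s / 2).re} ∩ {w : ℂ | (w + s / 2).re < 1} ∩
      ({w : ℂ | -2 < (w - s / 2).re} ∩ {w : ℂ | (w - s / 2).re < 2}))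
    (by
      refine IsOpen.inter (IsOpen.inter ?_ ?_) (IsOpen.inter ?_ ?_)
      · exact isOpen_lt (by fun_prop) (by fun_prop)
      · exact isOpen_lt (by fun_prop) (by fun_prop)
      · exact isOpen_lt (by fun_prop) (by fun_prop)
      · exact isOpen_lt (by fun_prop) (by fun_prop))
    (by
      intro w h1 h2
      simp only [Set.mem_inter_iff, Set.mem_ofPred_eq, Complex.sub_re, Complex.add_re, hpre]
      refine ⟨⟨?_, ?_⟩, ?_, ?_⟩ <;> linarith)
    (by
      rintro w ⟨⟨h1, h2⟩, h3, h4⟩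
      refine DifferentiableAt.differentiableWithinAt ?_
      refine DifferentiableAt.div ?_ ?_ ?_
      · refine DifferentiableAt.mul ?_ (DifferentiableAt.mul ?_ ?_)
        · exact (differentiableAt_id.neg).const_cpow (Or.inl hx')
        · exact (differentiable_riemannZeta₁ _).comp w (by fun_prop)
        · exact (differentiable_riemannZeta₁ _).comp w (by fun_prop)
      · refine DifferentiableAt.mul (by fun_prop) (DifferentiableAt.mul (by fun_prop) ?_)
        exact (Sfun_diff _).comp w (by fun_prop)
      · exact mul_ne_zero two_ne_zero (mul_ne_zero (cos_ne h1 h2) (Sfun_ne h3 h4)))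
    (by
      intro w h1 h2 h3 h4
      have h3' := sub_ne_zero.mpr h3
      have h4' := sub_ne_zero.mpr h4
      have k1 : Complex.cos (π / 2 * (w + s / 2)) ≠ 0 := by
        apply cos_ne <;> rw [Complex.add_re, hpre] <;> linarith
      have k2 : Sfun (w - s / 2) ≠ 0 := by
        apply Sfun_ne <;> rw [Complex.sub_re, hpre] <;> linarith
      have n1 : 1 - w + s / 2 ≠ 1 := by
        intro h; apply h3'; linear_combination -h
      have n2 : 1 - w - s / 2 ≠ 1 := by
        intro h; apply h4'; linear_combination -h
      rw [FF, AA, den, ← mul_Sfun, riemannZeta_eq_inv_sub_mul n1, riemannZeta_eq_inv_sub_mul n2]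
      rw [show 1 - w + s / 2 - 1 = -(w - s / 2) by ring,
        show 1 - w - s / 2 - 1 = -(w - -s / 2) by ring]
      field_simp)
    (C * (x ^ (-(-1 / 2) : ℝ) + x ^ (-(1 / 2) : ℝ))) (|s.im| + 1)
    (by
      intro T hT u hu1 hu2
      rw [norm_mul, norm_cpow_line hx]
      calc ‖FF s (u + T * I)‖ * x ^ (-u) ≤ C * Real.exp (-|T|) *
            (x ^ (-(-1 / 2) : ℝ) + x ^ (-(1 / 2) : ℝ)) :=
            mul_le_mul (hF T hT u hu1 hu2) (rpow_le_add hx hu1 hu2) (by positivity) (by positivity)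
        _ = _ := by ring)
  obtain ⟨ia, ib, hmain⟩ := main
  refine ⟨ia, ib, ?_⟩
  rw [hmain, ppq, AA_q hs0, AA_p hs0 hs1 hs2 hx, fRes]
  ring


/-! ### The Dirichlet series part of `fRam` -/

lemma csigma_conv (s : ℂ) :
    LSeries.convolution (fun n : ℕ => (n : ℂ) ^ (-s)) (1 : ℕ → ℂ) = csigma (-s) := by
  rw [LSeries.convolution_def]
  ext n
  simp only [Pi.one_apply, mul_one]
  rw [Nat.sum_divisorsAntidiagonal (fun i _ => (i : ℂ) ^ (-s))]
  rfl

lemma term_pow (s z : ℂ) :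
    LSeries.term (fun n : ℕ => (n : ℂ) ^ (-s)) z = LSeries.term 1 (z + s) := by
  ext n
  rcases eq_or_ne n 0 with rfl | hn
  · simp
  · rw [LSeries.term_of_ne_zero hn, LSeries.term_of_ne_zero hn, Pi.one_apply,
      Complex.cpow_add _ _ (by exact_mod_cast hn), Complex.cpow_neg]
    have h1 : (n : ℂ) ^ s ≠ 0 := by simp [Complex.cpow_eq_zero_iff, hn]
    have h2 : (n : ℂ) ^ z ≠ 0 := by simp [Complex.cpow_eq_zero_iff, hn]
    field_simp

lemma zeta_mul_zeta {s z : ℂ} (h1 : 1 < z.re) (h2 : 1 < (z + s).re) :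
    HasSum (fun n : ℕ => csigma (-s) (n + 1) * ((n : ℂ) + 1) ^ (-z))
      (riemannZeta (z + s) * riemannZeta z) := by
  have a1 : LSeriesHasSum (fun n : ℕ => (n : ℂ) ^ (-s)) z (riemannZeta (z + s)) := by
    unfold LSeriesHasSum
    rw [term_pow]
    rw [← LSeries_one_eq_riemannZeta h2]
    exact (LSeriesSummable_one_iff.mpr h2).LSeriesHasSum
  have a2 : LSeriesHasSum 1 z (riemannZeta z) := by
    rw [← LSeries_one_eq_riemannZeta h1]
    exact (LSeriesSummable_one_iff.mpr h1).LSeriesHasSum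
  have a3 := a1.convolution a2
  rw [csigma_conv] at a3
  unfold LSeriesHasSum at a3
  have h0 := (hasSum_nat_add_iff' 1).mpr a3
  simp only [Finset.sum_range_one, LSeries.term_zero, sub_zero] at h0
  refine h0.congr_fun ?_ |> fun h => h
  intro n
  rw [LSeries.term_of_ne_zero (Nat.succ_ne_zero n), Complex.cpow_neg]
  push_cast
  rfl

/-- the tail terms of `fRam` -/
lemma FF_left {s : ℂ} (hs1 : -1 < s.re) (hs2 : s.re < 1) {x : ℝ} (hx : 0 < x)
    (hxn : ∀ n : ℕ, x ≠ (n : ℝ) + 1) :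
    (∫ τ : ℝ, FF s (((-1 / 2 : ℝ) : ℂ) + τ * I) * (x : ℂ) ^ (-(((-1 / 2 : ℝ) : ℂ) + τ * I))) =
    2 * π * ((x : ℂ) ^ (2 - s / 2) / ((π : ℂ) * Complex.cos ((π : ℂ) * s / 2)) *
      ∑' n : ℕ, csigma (-s) (n + 1) *
        (if x = ((n : ℝ) + 1) then (s - 1) * ((n : ℂ) + 1) ^ (s - 3) / 2
          else (((n : ℂ) + 1) ^ (s - 1) - (x : ℂ) ^ (s - 1)) /
            (((n : ℂ) + 1) ^ 2 - (x : ℂ) ^ 2))) := by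
  have hx' : (x : ℂ) ≠ 0 := by exact_mod_cast hx.ne'
  have c0 : Complex.cos (π * s / 2) ≠ 0 := by
    have := cos_ne (z := s) hs1 hs2
    rwa [show (π : ℂ) * s / 2 = π / 2 * s by ring]
  -- the terms
  let G : ℕ → ℝ → ℂ := fun n τ => csigma (-s) (n + 1) * ((n : ℂ) + 1) ^ (s / 2 - 1) *
    (((x / ((n : ℝ) + 1) : ℝ) : ℂ) ^ (-(((-1 / 2 : ℝ) : ℂ) + τ * I)) /
      den s (((-1 / 2 : ℝ) : ℂ) + τ * I))
  have hpos : ∀ n : ℕ, 0 < x / ((n : ℝ) + 1) := fun n => by positivity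
  have Nne : ∀ n : ℕ, ((n : ℂ) + 1) ≠ 0 := fun n => by exact_mod_cast Nat.succ_ne_zero n
  have hGint : ∀ n, Integrable (G n) := fun n => (kernelJ s hs1 hs2 (hpos n)).1.const_mul _
  have split : ∀ (n : ℕ) (w : ℂ), ((x / ((n : ℝ) + 1) : ℝ) : ℂ) ^ w =
      (x : ℂ) ^ w * ((n : ℂ) + 1) ^ (-w) := by
    intro n w
    rw [div_eq_mul_inv, Complex.ofReal_mul,
      Complex.mul_cpow_ofReal_nonneg hx.le (by positivity)]
    congr 1
    rw [Complex.ofReal_inv, Complex.inv_cpow _ _ (by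
      rw [Complex.arg_ofReal_of_nonneg (by positivity)]; exact Real.pi_pos.ne), Complex.cpow_neg]
    push_cast
    rfl
  have hGterm : ∀ n τ, G n τ = csigma (-s) (n + 1) *
      ((n : ℂ) + 1) ^ (-(1 - (((-1 / 2 : ℝ) : ℂ) + τ * I) - s / 2)) *
      ((x : ℂ) ^ (-(((-1 / 2 : ℝ) : ℂ) + τ * I)) / den s (((-1 / 2 : ℝ) : ℂ) + τ * I)) := by
    intro n τ
    simp only [G]
    rw [split, show -(1 - (((-1 / 2 : ℝ) : ℂ) + τ * I) - s / 2) =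
      (s / 2 - 1) + -(-(((-1 / 2 : ℝ) : ℂ) + τ * I)) by ring, Complex.cpow_add _ _ (Nne n)]
    ring
  have re1 : ∀ τ : ℝ, ((1 : ℂ) - (((-1 / 2 : ℝ) : ℂ) + τ * I) - s / 2).re = 3 / 2 - s.re / 2 := by
    intro τ; simp; ring
  have hsum : ∀ τ : ℝ, HasSum (fun n => G n τ) (FF s (((-1 / 2 : ℝ) : ℂ) + τ * I) *
      (x : ℂ) ^ (-(((-1 / 2 : ℝ) : ℂ) + τ * I))) := by
    intro τ
    simp_rw [hGterm]
    have h := zeta_mul_zeta (s := s) (z := 1 - (((-1 / 2 : ℝ) : ℂ) + τ * I) - s / 2)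
      (by rw [re1]; linarith) (by rw [Complex.add_re, re1]; linarith)
    rw [show 1 - (((-1 / 2 : ℝ) : ℂ) + τ * I) - s / 2 + s =
      1 - (((-1 / 2 : ℝ) : ℂ) + τ * I) + s / 2 by ring] at h
    have h' := h.mul_right
      ((x : ℂ) ^ (-(((-1 / 2 : ℝ) : ℂ) + τ * I)) / den s (((-1 / 2 : ℝ) : ℂ) + τ * I))
    have e : FF s (((-1 / 2 : ℝ) : ℂ) + τ * I) * (x : ℂ) ^ (-(((-1 / 2 : ℝ) : ℂ) + τ * I)) =
        riemannZeta (1 - (((-1 / 2 : ℝ) : ℂ) + τ * I) + s / 2) *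
        riemannZeta (1 - (((-1 / 2 : ℝ) : ℂ) + τ * I) - s / 2) *
        ((x : ℂ) ^ (-(((-1 / 2 : ℝ) : ℂ) + τ * I)) / den s (((-1 / 2 : ℝ) : ℂ) + τ * I)) := by
      unfold FF; ring
    rw [e]
    exact h'
  have norm1 : ∀ (n : ℕ) (w : ℂ), ‖((n : ℂ) + 1) ^ w‖ = ((n : ℝ) + 1) ^ w.re := by
    intro n w
    have := Complex.norm_cpow_eq_rpow_re_of_pos (x := (n : ℝ) + 1) (by positivity) w
    rw [← this]; push_cast; rfl
  have hnorm : ∀ n τ, ‖G n τ‖ = ‖csigma (-s) (n + 1)‖ * ((n : ℝ) + 1) ^ (-(3 / 2 - s.re / 2)) *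
      ‖(x : ℂ) ^ (-(((-1 / 2 : ℝ) : ℂ) + τ * I)) / den s (((-1 / 2 : ℝ) : ℂ) + τ * I)‖ := by
    intro n τ
    rw [hGterm, norm_mul, norm_mul, norm1, Complex.neg_re, re1]
  have hsn : Summable (fun n : ℕ =>
      ‖csigma (-s) (n + 1)‖ * ((n : ℝ) + 1) ^ (-(3 / 2 - s.re / 2))) := by
    have h := (zeta_mul_zeta (s := s) (z := 1 - (((-1 / 2 : ℝ) : ℂ) + (0 : ℝ) * I) - s / 2)
      (by rw [re1]; linarith) (by rw [Complex.add_re, re1]; linarith)).summable.norm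
    refine h.congr (fun n => ?_)
    rw [norm_mul, norm1, Complex.neg_re, re1]
  have hGsum : Summable fun n => ∫ τ, ‖G n τ‖ := by
    simp_rw [hnorm, integral_const_mul]
    exact hsn.mul_right _
  have H := hasSum_integral_of_summable_integral_norm hGint hGsum
  have e1 : (∫ τ : ℝ, ∑' n, G n τ) = ∫ τ : ℝ, FF s (((-1 / 2 : ℝ) : ℂ) + τ * I) *
      (x : ℂ) ^ (-(((-1 / 2 : ℝ) : ℂ) + τ * I)) := by
    congr 1; ext τ; exact (hsum τ).tsum_eq
  rw [e1] at H
  rw [← H.tsum_eq, ← tsum_mul_left, ← tsum_mul_left]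
  congr 1
  ext n
  rw [if_neg (hxn n)]
  simp only [G]
  rw [integral_const_mul]
  have hJ := (kernelJ s hs1 hs2 (hpos n)).2
  have hN2 : ((n : ℂ) + 1) ^ 2 - (x : ℂ) ^ 2 ≠ 0 := by
    have : ((n : ℝ) + 1) ^ 2 - x ^ 2 ≠ 0 := by
      intro h
      have h' : ((n : ℝ) + 1 - x) * ((n : ℝ) + 1 + x) = 0 := by linarith
      rcases mul_eq_zero.mp h' with h | h
      · exact hxn n (by linarith)
      · have : 0 < (n : ℝ) + 1 + x := by positivity
        linarith
    exact_mod_cast this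
  have hy : (1 - ((x / ((n : ℝ) + 1) : ℝ) : ℂ) ^ 2) =
      (((n : ℂ) + 1) ^ 2 - (x : ℂ) ^ 2) / ((n : ℂ) + 1) ^ 2 := by
    push_cast
    have := Nne n
    field_simp
  rw [hy] at hJ
  rw [split, split] at hJ
  set Jv := ∫ τ : ℝ, ((x / ((n : ℝ) + 1) : ℝ) : ℂ) ^ (-(((-1 / 2 : ℝ) : ℂ) + τ * I)) /
      den s (((-1 / 2 : ℝ) : ℂ) + τ * I)
  have hJv : Jv = ((n : ℂ) + 1) ^ 2 / (((n : ℂ) + 1) ^ 2 - (x : ℂ) ^ 2) *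
     (2 * ((x : ℂ) ^ (2 - s / 2) * ((n : ℂ) + 1) ^ (-(2 - s / 2)) -
        (x : ℂ) ^ (1 + s / 2) * ((n : ℂ) + 1) ^ (-(1 + s / 2))) / Complex.cos (π * s / 2)) := by
    rw [← hJ]
    have := Nne n
    field_simp
  have q1 : ((n : ℂ) + 1) ^ (s / 2 - 1) * ((n : ℂ) + 1) ^ 2 * ((n : ℂ) + 1) ^ (-(2 - s / 2)) =
      ((n : ℂ) + 1) ^ (s - 1) := by
    rw [← Complex.cpow_ofNat, ← Complex.cpow_add _ _ (Nne n), ← Complex.cpow_add _ _ (Nne n)]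
    congr 1; ring
  have q2 : ((n : ℂ) + 1) ^ (s / 2 - 1) * ((n : ℂ) + 1) ^ 2 * ((n : ℂ) + 1) ^ (-(1 + s / 2)) =
      1 := by
    rw [← Complex.cpow_ofNat, ← Complex.cpow_add _ _ (Nne n), ← Complex.cpow_add _ _ (Nne n),
      show s / 2 - 1 + 2 + -(1 + s / 2) = 0 by ring, Complex.cpow_zero]
  have q3 : (x : ℂ) ^ (1 + s / 2) = (x : ℂ) ^ (2 - s / 2) * (x : ℂ) ^ (s - 1) := by
    rw [← Complex.cpow_add _ _ hx']
    congr 1; ring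
  have step : ((n : ℂ) + 1) ^ (s / 2 - 1) * Jv = 2 / Complex.cos (π * s / 2) *
      ((x : ℂ) ^ (2 - s / 2) * (((n : ℂ) + 1) ^ (s / 2 - 1) * ((n : ℂ) + 1) ^ 2 *
        ((n : ℂ) + 1) ^ (-(2 - s / 2))) - (x : ℂ) ^ (1 + s / 2) *
        (((n : ℂ) + 1) ^ (s / 2 - 1) * ((n : ℂ) + 1) ^ 2 * ((n : ℂ) + 1) ^ (-(1 + s / 2)))) /
        (((n : ℂ) + 1) ^ 2 - (x : ℂ) ^ 2) := by
    rw [hJv]; ring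
  rw [mul_assoc, step, q1, q2, q3]
  have := pi_ne
  generalize Complex.cos (π * s / 2) = c at *
  generalize (x : ℂ) ^ (2 - s / 2) = X
  generalize (x : ℂ) ^ (s - 1) = X'
  generalize ((n : ℂ) + 1) ^ (s - 1) = X''
  field_simp

lemma fRam_inversion {s : ℂ} (hs0 : s ≠ 0) (hs1 : -1 < s.re) (hs2 : s.re < 1) {x : ℝ} (hx : 0 < x)
    (hxn : ∀ n : ℕ, x ≠ (n : ℝ) + 1) :
    fRam x s = 1 / (2 * π) * ∫ τ : ℝ, FF s (((1 / 2 : ℝ) : ℂ) + τ * I) *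
      (x : ℂ) ^ (-(((1 / 2 : ℝ) : ℂ) + τ * I)) := by
  have h := (FF_shift hs0 hs1 hs2 hx).2.2
  rw [FF_left hs1 hs2 hx hxn, sub_eq_iff_eq_add] at h
  rw [h, fRes, fRam]
  have := pi_ne
  have h2 : (1 : ℂ) / (2 * π) * (2 * π) = 1 := by field_simp
  rw [← mul_add, ← mul_assoc, h2]
  ring


/-! ### Mellin transform of the Bessel function -/

lemma integral_full_half {h : ℝ → ℂ} (hi : Integrable h) :
    ∫ t : ℝ, h t = ∫ t in Set.Ioi (0 : ℝ), (h t + h (-t)) := by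
  have h1 : IntegrableOn (fun t => h (-t)) (Set.Ioi 0) := hi.comp_neg.integrableOn
  rw [integral_add hi.integrableOn h1, integral_comp_neg_Ioi, neg_zero, add_comm]
  have := integral_add_compl (measurableSet_Iic (a := (0 : ℝ))) hi
  rw [Set.compl_Iic] at this
  exact this.symm

lemma cosh_cpow (t : ℝ) (w : ℂ) : ((2 * Real.cosh t : ℝ) : ℂ) ^ (-w) =
    Complex.exp (-(w * Real.log (2 * Real.cosh t))) := by
  have h : 0 < 2 * Real.cosh t := by have := Real.cosh_pos t; positivity
  rw [Complex.cpow_def_of_ne_zero (by exact_mod_cast h.ne'), ← Complex.ofReal_log h.le]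
  congr 1; ring

lemma exp_cpow (r : ℝ) (u : ℂ) : ((Real.exp r : ℝ) : ℂ) ^ u = Complex.exp (r * u) := by
  rw [Complex.cpow_def_of_ne_zero (by exact_mod_cast (Real.exp_pos r).ne'),
    ← Complex.ofReal_log (Real.exp_pos r).le, Real.log_exp]

lemma sigmoid_two (t : ℝ) : Real.sigmoid (2 * t) =
    Real.exp (t - Real.log (2 * Real.cosh t)) := by
  have h : 0 < 2 * Real.cosh t := by have := Real.cosh_pos t; positivity
  rw [Real.exp_sub, Real.exp_log h, Real.sigmoid_def, Real.cosh_eq, inv_eq_one_div,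
    div_eq_div_iff (by positivity) (by positivity)]
  have e : Real.exp t * Real.exp (-(2 * t)) = Real.exp (-t) := by rw [← Real.exp_add]; ring_nf
  rw [mul_add, e]; ring

lemma one_sub_sigmoid_two (t : ℝ) : 1 - Real.sigmoid (2 * t) =
    Real.exp (-t - Real.log (2 * Real.cosh t)) := by
  have := sigmoid_two (-t)
  rw [Real.cosh_neg] at this
  rw [← this, ← Real.sigmoid_neg]
  congr 1; ring

lemma beta_cosh (u v : ℂ) : Complex.betaIntegral u v =
    ∫ t : ℝ, 2 * (Complex.exp ((u - v) * t) * ((2 * Real.cosh t : ℝ) : ℂ) ^ (-(u + v))) := by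
  have hd : ∀ t : ℝ, HasDerivAt (fun t : ℝ => Real.sigmoid (2 * t))
      (Real.sigmoid (2 * t) * (1 - Real.sigmoid (2 * t)) * (2 * 1)) t := fun t =>
    HasDerivAt.comp (h := fun t : ℝ => 2 * t) t (Real.hasDerivAt_sigmoid (2 * t))
      ((hasDerivAt_id t).const_mul 2)
  have hinj : Set.InjOn (fun t : ℝ => Real.sigmoid (2 * t)) Set.univ := by
    intro a _ b _ h
    have := Real.sigmoid_injective h
    linarith
  have him : Set.image (fun t : ℝ => Real.sigmoid (2 * t)) Set.univ = Set.Ioo 0 1 := by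
    rw [← Real.range_sigmoid, Set.image_univ]
    ext y
    constructor
    · rintro ⟨t, rfl⟩; exact ⟨2 * t, rfl⟩
    · rintro ⟨t, rfl⟩; exact ⟨t / 2, by simp only; congr 1; ring⟩
  have h := integral_image_eq_integral_abs_deriv_smul (s := Set.univ) MeasurableSet.univ
    (fun t _ => (hd t).hasDerivWithinAt) hinj
    (fun x : ℝ => (x : ℂ) ^ (u - 1) * (1 - (x : ℂ)) ^ (v - 1))
  rw [him] at h
  rw [Complex.betaIntegral, intervalIntegral.integral_of_le zero_le_one,
    integral_Ioc_eq_integral_Ioo, h, setIntegral_univ]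
  congr 1
  ext t
  rw [cosh_cpow]
  have e1 := sigmoid_two t
  have e2 := one_sub_sigmoid_two t
  set L := Real.log (2 * Real.cosh t)
  have e3 : (1 : ℂ) - (Real.sigmoid (2 * t) : ℂ) = ((Real.exp (-t - L) : ℝ) : ℂ) := by
    rw [← e2]; push_cast; ring
  rw [e3, e2, e1, abs_of_pos (by positivity), exp_cpow, exp_cpow, Complex.real_smul]
  push_cast
  rw [mul_one, mul_comm _ (2 : ℂ), mul_assoc]
  congr 1
  rw [← Complex.exp_add, ← Complex.exp_add, ← Complex.exp_add, ← Complex.exp_add]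
  congr 1
  ring

lemma integrable_exp_neg_abs : Integrable (fun t : ℝ => Real.exp (-|t|)) := by
  have h := integrable_of_exp_decay (φ := fun t : ℝ => ((Real.exp (-|t|) : ℝ) : ℂ)) (C := 1)
    (T₀ := 0) (by fun_prop) (fun t _ => by
      rw [Complex.norm_real, Real.norm_of_nonneg (Real.exp_pos _).le, one_mul])
  simpa only [RCLike.re_to_complex, Complex.ofReal_re] using h.re

lemma cosh_integrable {ν w : ℂ} (h : |ν.re| < w.re) : Integrable (fun t : ℝ =>
    Complex.exp (ν * t) * ((2 * Real.cosh t : ℝ) : ℂ) ^ (-w)) := by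
  have ha : 0 < w.re - |ν.re| := by linarith
  have hb : Integrable (fun t : ℝ => Real.exp (-|(w.re - |ν.re|) * t|)) :=
    integrable_exp_neg_abs.comp_mul_left' ha.ne'
  refine hb.mono' ?_ (Filter.Eventually.of_forall fun t => ?_)
  · refine Continuous.aestronglyMeasurable ?_
    simp_rw [cosh_cpow]
    have : Continuous fun t : ℝ => Real.log (2 * Real.cosh t) := by
      refine Continuous.log (by fun_prop) fun t => ?_
      have := Real.cosh_pos t; positivity
    fun_prop
  · rw [cosh_cpow, ← Complex.exp_add, Complex.norm_exp]
    apply Real.exp_le_exp.mpr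
    have hL : |t| ≤ Real.log (2 * Real.cosh t) := by
      rw [Real.le_log_iff_exp_le (by have := Real.cosh_pos t; positivity), ← Real.cosh_abs,
        Real.cosh_eq]
      have := Real.exp_pos (-|t|)
      linarith
    rw [abs_mul, abs_of_pos ha]
    have h1 : ν.re * t ≤ |ν.re| * |t| := by rw [← abs_mul]; exact le_abs_self _
    have h0 : 0 ≤ |ν.re| := abs_nonneg _
    have h2 : w.re * |t| ≤ w.re * Real.log (2 * Real.cosh t) :=
      mul_le_mul_of_nonneg_left hL (by linarith)
    simp
    linarith

lemma cosh_half_integrable {ν w : ℂ} (h : |ν.re| < w.re) : IntegrableOn (fun t : ℝ =>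
    Complex.cosh (ν * t) * ((2 * Real.cosh t : ℝ) : ℂ) ^ (-w)) (Set.Ioi 0) := by
  have h1 := cosh_integrable h
  have h2 := cosh_integrable (ν := -ν) (w := w) (by simpa using h)
  refine (((h1.add h2).div_const 2).integrableOn).congr_fun (fun t _ => ?_) measurableSet_Ioi
  simp only [Pi.add_apply]
  rw [Complex.cosh, neg_mul]; ring

lemma cosh_half_integral {ν w : ℂ} (h : |ν.re| < w.re) :
    4 * ∫ t in Set.Ioi (0 : ℝ), Complex.cosh (ν * t) * ((2 * Real.cosh t : ℝ) : ℂ) ^ (-w) =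
      Complex.betaIntegral ((w + ν) / 2) ((w - ν) / 2) := by
  rw [beta_cosh, show (w + ν) / 2 - (w - ν) / 2 = ν by ring,
    show (w + ν) / 2 + (w - ν) / 2 = w by ring, integral_const_mul,
    integral_full_half (cosh_integrable h), ← integral_const_mul, ← integral_const_mul]
  congr 1
  ext t
  rw [Real.cosh_neg, Complex.cosh]
  push_cast
  rw [mul_neg]
  ring

lemma cpow_exp_integrable {w : ℂ} (hw : 0 < w.re) {r : ℝ} (hr : 0 < r) :
    IntegrableOn (fun x : ℝ => (x : ℂ) ^ (w - 1) * Complex.exp (-(r * x))) (Set.Ioi 0) := by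
  have h := integrableOn_rpow_mul_exp_neg_mul_rpow (p := 1) (s := w.re - 1) (b := r)
    (by linarith) one_pos hr
  refine Integrable.mono' h ?_ ?_
  · refine ContinuousOn.aestronglyMeasurable ?_ measurableSet_Ioi
    refine ContinuousOn.mul ?_ (by fun_prop)
    intro x hx
    refine ContinuousAt.continuousWithinAt ?_
    exact Complex.continuousAt_ofReal_cpow_const x (w - 1) (Or.inr (ne_of_gt hx))
  · refine (ae_restrict_mem measurableSet_Ioi).mono fun x hx => ?_
    have hx : (0 : ℝ) < x := hx
    rw [norm_mul, Complex.norm_cpow_eq_rpow_re_of_pos hx, Complex.norm_exp, Real.rpow_one]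
    simp

lemma bessel_prod_integrable {ν w : ℂ} (h : |ν.re| < w.re) {c : ℝ} (hc : 0 < c) :
    Integrable (fun p : ℝ × ℝ => (p.1 : ℂ) ^ (w - 1) *
      (Complex.exp (-((c * p.1 : ℝ) : ℂ) * (Real.cosh p.2 : ℂ)) * Complex.cosh (ν * (p.2 : ℂ))))
      ((volume.restrict (Set.Ioi (0 : ℝ))).prod (volume.restrict (Set.Ioi (0 : ℝ)))) := by
  have hw : 0 < w.re := lt_of_le_of_lt (abs_nonneg _) h
  have hm : Measurable (fun p : ℝ × ℝ => (p.1 : ℂ) ^ (w - 1) *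
      (Complex.exp (-((c * p.1 : ℝ) : ℂ) * (Real.cosh p.2 : ℂ)) *
        Complex.cosh (ν * (p.2 : ℂ)))) := by
    refine Measurable.mul (by fun_prop) (Continuous.measurable ?_)
    fun_prop
  rw [integrable_prod_iff' hm.aestronglyMeasurable]
  have rew : ∀ t x : ℝ, (x : ℂ) ^ (w - 1) *
      (Complex.exp (-((c * x : ℝ) : ℂ) * (Real.cosh t : ℂ)) * Complex.cosh (ν * (t : ℂ))) =
      (x : ℂ) ^ (w - 1) * Complex.exp (-(((c * Real.cosh t : ℝ) : ℂ) * x)) *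
        Complex.cosh (ν * t) := by
    intro t x
    rw [mul_assoc]
    congr 3
    push_cast; ring
  simp only [rew]
  refine ⟨Filter.Eventually.of_forall fun t => ?_, ?_⟩
  · have := Real.cosh_pos t
    exact (cpow_exp_integrable hw (by positivity)).mul_const _
  · have h0 := (cosh_half_integrable (ν := ν) (w := (w.re : ℂ)) (by simpa using h)).norm
    have h1 := h0.mul_const ((2 / c) ^ w.re * Real.Gamma w.re)
    refine h1.congr (Filter.Eventually.of_forall fun t => ?_)
    simp only
    have hp := Real.cosh_pos t
    have hI : (∫ x : ℝ in Set.Ioi 0, ‖(x : ℂ) ^ (w - 1) *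
        Complex.exp (-(((c * Real.cosh t : ℝ) : ℂ) * x)) * Complex.cosh (ν * t)‖) =
        (∫ x : ℝ in Set.Ioi 0, x ^ (w.re - 1) * Real.exp (-((c * Real.cosh t) * x))) *
          ‖Complex.cosh (ν * t)‖ := by
      rw [← integral_mul_const]
      refine setIntegral_congr_fun measurableSet_Ioi fun x hx => ?_
      have hx : (0 : ℝ) < x := hx
      rw [norm_mul, norm_mul, Complex.norm_cpow_eq_rpow_re_of_pos hx, Complex.norm_exp]
      congr 3
      rw [Complex.neg_re, Complex.re_ofReal_mul, Complex.ofReal_re]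
    rw [hI, Real.integral_rpow_mul_exp_neg_mul_Ioi hw (by positivity), norm_mul,
      Complex.norm_cpow_eq_rpow_re_of_pos (by positivity), Complex.neg_re, Complex.ofReal_re]
    have : (1 / (c * Real.cosh t)) ^ w.re = (2 * Real.cosh t) ^ (-w.re) * (2 / c) ^ w.re := by
      rw [Real.rpow_neg (by positivity), ← Real.inv_rpow (by positivity),
        ← Real.mul_rpow (by positivity) (by positivity)]
      congr 1
      field_simp
    rw [this]; ring

lemma bessel_integrable {ν w : ℂ} (h : |ν.re| < w.re) {c : ℝ} (hc : 0 < c) :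
    IntegrableOn (fun x : ℝ => (x : ℂ) ^ (w - 1) * Kbes ν ((c * x : ℝ) : ℂ)) (Set.Ioi 0) := by
  have := (bessel_prod_integrable h hc).integral_prod_left
  refine this.congr (Filter.Eventually.of_forall fun x => ?_)
  simp only
  rw [integral_const_mul, Kbes]

lemma bessel_mellin {ν w : ℂ} (h : |ν.re| < w.re) {c : ℝ} (hc : 0 < c) :
    ∫ x in Set.Ioi (0 : ℝ), (x : ℂ) ^ (w - 1) * Kbes ν ((c * x : ℝ) : ℂ) =
      ((c / 2 : ℝ) : ℂ) ^ (-w) / 4 *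
        (Complex.Gamma ((w + ν) / 2) * Complex.Gamma ((w - ν) / 2)) := by
  have hw : 0 < w.re := lt_of_le_of_lt (abs_nonneg _) h
  have hab := abs_lt.mp h
  simp only [Kbes]
  simp_rw [← integral_const_mul]
  rw [integral_integral_swap (bessel_prod_integrable h hc)]
  rw [Complex.Gamma_mul_Gamma_eq_betaIntegral (by simp; linarith) (by simp; linarith),
    ← cosh_half_integral h, show (w + ν) / 2 + (w - ν) / 2 = w by ring,
    ← mul_assoc, ← mul_assoc, ← integral_const_mul]
  refine setIntegral_congr_fun measurableSet_Ioi fun t ht => ?_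
  have hp := Real.cosh_pos t
  have e : ∀ x : ℝ, (x : ℂ) ^ (w - 1) *
      (Complex.exp (-((c * x : ℝ) : ℂ) * (Real.cosh t : ℂ)) * Complex.cosh (ν * (t : ℂ))) =
      (x : ℂ) ^ (w - 1) * Complex.exp (-(((c * Real.cosh t : ℝ) : ℂ) * x)) *
        Complex.cosh (ν * t) := by
    intro x
    rw [mul_assoc]
    congr 3
    push_cast; ring
  simp_rw [e]
  rw [integral_mul_const, Complex.integral_cpow_mul_exp_neg_mul_Ioi hw (by positivity)]
  have e2 : (1 / ((c * Real.cosh t : ℝ) : ℂ)) ^ w =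
      ((c / 2 : ℝ) : ℂ) ^ (-w) * ((2 * Real.cosh t : ℝ) : ℂ) ^ (-w) := by
    rw [← Complex.mul_cpow_ofReal_nonneg (by positivity) (by positivity), ← Complex.ofReal_mul,
      one_div, Complex.inv_cpow _ _ (by
        rw [Complex.arg_ofReal_of_nonneg (by positivity)]; exact Real.pi_pos.ne), ← Complex.cpow_neg]
    congr 2; ring
  rw [e2]; ring


/-! ### Assembly -/

lemma completed_eq {z : ℂ} (hz : 0 < z.re) :
    (π : ℂ) ^ (-z / 2) * Complex.Gamma (z / 2) * riemannZeta z = completedRiemannZeta z := by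
  have hne : z ≠ 0 := by rintro rfl; simp at hz
  have hg := Complex.Gammaℝ_ne_zero_of_re_pos hz
  rw [riemannZeta_def_of_ne_zero hne]
  rw [Complex.Gammaℝ_def] at hg ⊢
  rw [mul_comm, div_mul_cancel₀ _ hg]

/-- the symmetric integrand -/
noncomputable def QQ (s : ℂ) (τ : ℝ) : ℂ :=
  completedRiemannZeta (1 / 2 + τ * I + s / 2) * completedRiemannZeta (1 / 2 + τ * I - s / 2) /
    den s (1 / 2 + τ * I)

lemma den_one_sub (s w : ℂ) : den s (1 - w) = den s w := by
  rw [den, den]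
  rw [show (π : ℂ) / 2 * (1 - w + s / 2) = π / 2 - π / 2 * (w - s / 2) by ring,
    show (π : ℂ) / 2 * (1 - w - s / 2) = π / 2 - π / 2 * (w + s / 2) by ring,
    Complex.cos_pi_div_two_sub, Complex.sin_pi_div_two_sub]
  ring

lemma QQ_neg (s : ℂ) (τ : ℝ) : QQ s (-τ) = QQ s τ := by
  unfold QQ
  push_cast
  have e : (1 : ℂ) / 2 + -τ * I = 1 - (1 / 2 + τ * I) := by ring
  rw [e, den_one_sub,
    show 1 - ((1 : ℂ) / 2 + τ * I) + s / 2 = 1 - (1 / 2 + τ * I - s / 2) by ring,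
    show 1 - ((1 : ℂ) / 2 + τ * I) - s / 2 = 1 - (1 / 2 + τ * I + s / 2) by ring,
    completedRiemannZeta_one_sub, completedRiemannZeta_one_sub, mul_comm]

lemma FF_mellin {s : ℂ} (hs1 : -1 < s.re) (hs2 : s.re < 1) {α : ℝ} (hα : 0 < α) (τ : ℝ) :
    FF s (((1 / 2 : ℝ) : ℂ) + τ * I) * ((((2 * π * α) / 2 : ℝ) : ℂ) ^ (-(1 / 2 - τ * I : ℂ)) / 4 *
      (Complex.Gamma ((1 / 2 - τ * I + s / 2) / 2) *
        Complex.Gamma ((1 / 2 - τ * I - s / 2) / 2))) =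
    (α : ℂ) ^ (-(1 / 2 : ℂ)) * ((α : ℂ) ^ (τ * I) * QQ s τ) / 4 := by
  have hα' : (α : ℂ) ≠ 0 := by exact_mod_cast hα.ne'
  have hpi := pi_ne
  rw [← QQ_neg, QQ, FF]
  push_cast
  have e0 : den s (1 / 2 + -τ * I) = den s (1 / 2 + τ * I) := by
    rw [← den_one_sub]; congr 1; ring
  rw [e0, ← completed_eq (z := 1 / 2 + -τ * I + s / 2) (by simp; linarith),
    ← completed_eq (z := 1 / 2 + -τ * I - s / 2) (by simp; linarith)]
  have e1 : (2 : ℂ) * π * α / 2 = (π : ℂ) * α := by ring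
  have e2 : ((π : ℂ) * α) ^ (-(1 / 2 - τ * I : ℂ)) =
      (π : ℂ) ^ (-(1 / 2 + -τ * I + s / 2) / 2) * (π : ℂ) ^ (-(1 / 2 + -τ * I - s / 2) / 2) *
      ((α : ℂ) ^ (-(1 / 2 : ℂ)) * (α : ℂ) ^ (τ * I)) := by
    rw [Complex.mul_cpow_ofReal_nonneg Real.pi_pos.le hα.le, ← Complex.cpow_add _ _ hpi,
      ← Complex.cpow_add _ _ hα']
    congr 2 <;> ring
  rw [e1, e2, show (1 : ℂ) - (1 / 2 + τ * I) + s / 2 = 1 / 2 + -τ * I + s / 2 by ring,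
    show (1 : ℂ) - (1 / 2 + τ * I) - s / 2 = 1 / 2 + -τ * I - s / 2 by ring,
    show (1 : ℂ) / 2 - τ * I + s / 2 = 1 / 2 + -τ * I + s / 2 by ring,
    show (1 : ℂ) / 2 - τ * I - s / 2 = 1 / 2 + -τ * I - s / 2 by ring]
  ring

lemma FF_integrable {s : ℂ} (hs0 : s ≠ 0) (hs1 : -1 < s.re) (hs2 : s.re < 1) :
    Integrable (fun τ : ℝ => FF s (((1 / 2 : ℝ) : ℂ) + τ * I)) := by
  have := (FF_shift hs0 hs1 hs2 (x := 1) one_pos).2.1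
  simpa only [Complex.ofReal_one, Complex.one_cpow, mul_one] using this

lemma K_side {s : ℂ} (hs0 : s ≠ 0) (hs1 : -1 < s.re) (hs2 : s.re < 1) {α : ℝ} (hα : 0 < α) :
    Integrable (fun τ : ℝ => (α : ℂ) ^ (τ * I) * QQ s τ) ∧
    (Real.sqrt α : ℂ) *
      (∫ x in Set.Ioi (0 : ℝ), Kbes (s / 2) ((2 * π * α * x : ℝ) : ℂ) * fRam x s) =
      1 / (8 * π) * ∫ τ : ℝ, (α : ℂ) ^ (τ * I) * QQ s τ := by
  have hα' : (α : ℂ) ≠ 0 := by exact_mod_cast hα.ne'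
  have hpi := pi_ne
  have hc : 0 < 2 * π * α := by positivity
  have hab : |s.re| < 1 := abs_lt.mpr ⟨hs1, hs2⟩
  have hν : ∀ τ : ℝ, |(s / 2).re| < (1 / 2 - τ * I : ℂ).re := by
    intro τ
    have : (s / 2).re = s.re / 2 := by simp
    rw [this, abs_div]
    simp
    linarith
  have hmel := fun τ : ℝ => bessel_mellin (hν τ) hc
  have hK := bessel_integrable (hν 0) hc
  have hF := FF_integrable hs0 hs1 hs2
  -- Fubini
  have hprod : Integrable (Function.uncurry fun (x τ : ℝ) =>
      FF s (((1 / 2 : ℝ) : ℂ) + τ * I) *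
        ((x : ℂ) ^ ((1 / 2 - τ * I : ℂ) - 1) * Kbes (s / 2) ((2 * π * α * x : ℝ) : ℂ)))
      ((volume.restrict (Set.Ioi (0 : ℝ))).prod volume) := by
    have h1 := hK.mul_prod hF
    have hm : Measurable (fun p : ℝ × ℝ => (p.1 : ℂ) ^ (-(p.2 * I : ℂ))) := by
      refine Measurable.pow (by fun_prop) (by fun_prop)
    have hpos : ∀ᵐ p : ℝ × ℝ ∂((volume.restrict (Set.Ioi (0 : ℝ))).prod volume), 0 < p.1 := by
      have : ∀ᵐ x ∂(volume.restrict (Set.Ioi (0 : ℝ))), 0 < x :=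
        (ae_restrict_mem measurableSet_Ioi).mono fun x hx => hx
      exact Measure.quasiMeasurePreserving_fst.ae this
    have h2 := h1.bdd_mul (c := 1) hm.aestronglyMeasurable (by
      filter_upwards [hpos] with p hp
      rw [Complex.norm_cpow_eq_rpow_re_of_pos hp]
      simp)
    refine h2.congr ?_
    filter_upwards [hpos] with p hp
    have hp' : (p.1 : ℂ) ≠ 0 := by exact_mod_cast hp.ne'
    simp only [Function.uncurry]
    have e : (p.1 : ℂ) ^ ((1 / 2 - p.2 * I : ℂ) - 1) =
        (p.1 : ℂ) ^ (-(p.2 * I : ℂ)) * (p.1 : ℂ) ^ ((1 / 2 - (0 : ℝ) * I : ℂ) - 1) := by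
      rw [← Complex.cpow_add _ _ hp']
      congr 1; push_cast; ring
    rw [e]; ring
  have hright := hprod.integral_prod_right
  have eτ : ∀ τ : ℝ, (∫ x in Set.Ioi (0 : ℝ), Function.uncurry (fun (x τ : ℝ) =>
      FF s (((1 / 2 : ℝ) : ℂ) + τ * I) *
        ((x : ℂ) ^ ((1 / 2 - τ * I : ℂ) - 1) * Kbes (s / 2) ((2 * π * α * x : ℝ) : ℂ))) (x, τ)) =
      (α : ℂ) ^ (-(1 / 2 : ℂ)) * ((α : ℂ) ^ (τ * I) * QQ s τ) / 4 := by
    intro τ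
    simp only [Function.uncurry]
    rw [integral_const_mul, hmel, FF_mellin hs1 hs2 hα]
  have ha0 : (α : ℂ) ^ (-(1 / 2 : ℂ)) ≠ 0 := by simp [Complex.cpow_eq_zero_iff, hα']
  simp_rw [eτ] at hright
  have hQ : Integrable (fun τ : ℝ => (α : ℂ) ^ (τ * I) * QQ s τ) := by
    refine (hright.const_mul (4 / (α : ℂ) ^ (-(1 / 2 : ℂ)))).congr
      (Filter.Eventually.of_forall fun τ => ?_)
    field_simp
  refine ⟨hQ, ?_⟩
  have hsq : (Real.sqrt α : ℂ) * (α : ℂ) ^ (-(1 / 2 : ℂ)) = 1 := by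
    have : (Real.sqrt α : ℂ) = (α : ℂ) ^ (1 / 2 : ℂ) := by
      rw [Real.sqrt_eq_rpow, Complex.ofReal_cpow hα.le]
      norm_num
    rw [this, Complex.cpow_neg, mul_inv_cancel₀]
    simp [Complex.cpow_eq_zero_iff, hα']
  have hae : ∀ᵐ x ∂(volume.restrict (Set.Ioi (0 : ℝ))),
      Kbes (s / 2) ((2 * π * α * x : ℝ) : ℂ) * fRam x s = 1 / (2 * π) * ∫ τ : ℝ,
        FF s (((1 / 2 : ℝ) : ℂ) + τ * I) *
        ((x : ℂ) ^ ((1 / 2 - τ * I : ℂ) - 1) * Kbes (s / 2) ((2 * π * α * x : ℝ) : ℂ)) := by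
    have hcount : (Set.range fun n : ℕ => (n : ℝ) + 1).Countable := Set.countable_range _
    filter_upwards [ae_restrict_mem measurableSet_Ioi, hcount.ae_notMem _] with x hx hxn
    have hx : (0 : ℝ) < x := hx
    rw [fRam_inversion hs0 hs1 hs2 hx (fun n h => hxn ⟨n, h.symm⟩), mul_left_comm]
    congr 1
    rw [← integral_const_mul]
    congr 1
    ext τ
    rw [show ((1 : ℂ) / 2 - τ * I : ℂ) - 1 = -(((1 / 2 : ℝ) : ℂ) + τ * I) by push_cast; ring]
    ring
  rw [integral_congr_ae hae, integral_const_mul, integral_integral_swap hprod]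
  have eτ' := eτ
  simp only [Function.uncurry] at eτ'
  simp_rw [eτ']
  rw [integral_div, integral_const_mul]
  calc _ = (Real.sqrt α : ℂ) * (α : ℂ) ^ (-(1 / 2 : ℂ)) * (1 / (8 * π)) *
        ∫ τ : ℝ, (α : ℂ) ^ (τ * I) * QQ s τ := by
        generalize (∫ τ : ℝ, (α : ℂ) ^ (τ * I) * QQ s τ) = J
        generalize (α : ℂ) ^ (-(1 / 2 : ℂ)) = A
        field_simp; ring
    _ = _ := by rw [hsq, one_mul]

lemma Gamma_mul_Gamma_neg {y : ℂ} (hy : y ≠ 0) :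
    Complex.Gamma y * Complex.Gamma (-y) = -π / (y * Complex.sin (π * y)) := by
  have h := Complex.Gamma_mul_Gamma_one_sub y
  have h2 := Complex.Gamma_add_one (-y) (neg_ne_zero.mpr hy)
  rw [show 1 - y = -y + 1 by ring, h2] at h
  rw [neg_div, mul_comm y, ← div_div, ← h]
  field_simp

lemma integrand_eq {s : ℂ} (hs1 : -1 < s.re) (hs2 : s.re < 1) (t : ℝ) :
    Complex.Gamma ((s - 1 + (t : ℂ) * Complex.I) / 4) *
            Complex.Gamma ((s - 1 - (t : ℂ) * Complex.I) / 4) *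
            Complex.Gamma ((-s + 1 + (t : ℂ) * Complex.I) / 4) *
            Complex.Gamma ((-s + 1 - (t : ℂ) * Complex.I) / 4) *
            XiR (((t : ℂ) - Complex.I * s) / 2) * XiR (((t : ℂ) + Complex.I * s) / 2) /
            ((t : ℂ) ^ 2 + (s + 1) ^ 2) = π ^ 2 / 2 * QQ s (t / 2) := by
  set w : ℂ := 1 / 2 + ((t / 2 : ℝ) : ℂ) * I with hw
  have hwre : w.re = 1 / 2 := by
    rw [hw, Complex.add_re, Complex.re_ofReal_mul]; simp
  have hw' : w = 1 / 2 + t / 2 * I := by rw [hw]; push_cast; ring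
  have n1 : w - s / 2 ≠ 0 := by
    intro h
    have := congrArg Complex.re h
    rw [Complex.sub_re, hwre] at this
    simp at this; linarith
  have n2 : w + s / 2 - 1 ≠ 0 := by
    intro h
    have := congrArg Complex.re h
    rw [Complex.sub_re, Complex.add_re, hwre] at this
    simp at this; linarith
  have n3 : w + s / 2 ≠ 0 := by
    intro h
    have := congrArg Complex.re h
    rw [Complex.add_re, hwre] at this
    simp at this; linarith
  have n4 : 1 + s / 2 - w ≠ 0 := by
    intro h
    have := congrArg Complex.re h
    rw [Complex.sub_re, Complex.add_re, hwre] at this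
    simp at this; linarith
  have y1 : (-s + 1 + (t : ℂ) * I) / 4 = (w - s / 2) / 2 := by rw [hw']; ring
  have y1n : (s - 1 - (t : ℂ) * I) / 4 = -((w - s / 2) / 2) := by rw [hw']; ring
  have y2 : (s - 1 + (t : ℂ) * I) / 4 = (w + s / 2 - 1) / 2 := by rw [hw']; ring
  have y2n : (-s + 1 - (t : ℂ) * I) / 4 = -((w + s / 2 - 1) / 2) := by rw [hw']; ring
  have x1 : XiR (((t : ℂ) - I * s) / 2) = 1 / 2 * (w + s / 2) * (w + s / 2 - 1) *
      completedRiemannZeta (w + s / 2) := by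
    have e : (1 : ℂ) / 2 + ((t : ℂ) - I * s) / 2 * I = w + s / 2 := by
      rw [hw']; linear_combination (-s / 2) * Complex.I_sq
    rw [XiR, e, xiR, ← completed_eq (by rw [Complex.add_re, hwre]; simp; linarith)]
    ring
  have x2 : XiR (((t : ℂ) + I * s) / 2) = 1 / 2 * (w - s / 2) * (w - s / 2 - 1) *
      completedRiemannZeta (w - s / 2) := by
    have e : (1 : ℂ) / 2 + ((t : ℂ) + I * s) / 2 * I = w - s / 2 := by
      rw [hw']; linear_combination (s / 2) * Complex.I_sq
    rw [XiR, e, xiR, ← completed_eq (by rw [Complex.sub_re, hwre]; simp; linarith)]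
    ring
  have d : (t : ℂ) ^ 2 + (s + 1) ^ 2 = 4 * (w + s / 2) * (1 + s / 2 - w) := by
    rw [hw']; linear_combination ((t : ℂ) ^ 2) * Complex.I_sq
  have g1 := Gamma_mul_Gamma_neg (y := (w - s / 2) / 2) (div_ne_zero n1 two_ne_zero)
  have g2 := Gamma_mul_Gamma_neg (y := (w + s / 2 - 1) / 2) (div_ne_zero n2 two_ne_zero)
  have s1 : Complex.sin (π * ((w - s / 2) / 2)) = Complex.sin (π / 2 * (w - s / 2)) := by
    congr 1; ring
  have s2 : Complex.sin (π * ((w + s / 2 - 1) / 2)) = -Complex.cos (π / 2 * (w + s / 2)) := by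
    rw [show (π : ℂ) * ((w + s / 2 - 1) / 2) = π / 2 * (w + s / 2) - π / 2 by ring,
      Complex.sin_sub_pi_div_two]
  rw [s1] at g1
  rw [s2] at g2
  rw [y1, y1n, y2, y2n, x1, x2, d, QQ, ← hw, den]
  have : ∀ a b c d' e f : ℂ, a * b * c * d' * e * f = (c * b) * (a * d') * e * f := by
    intros; ring
  rw [this, g1, g2]
  have k1 : Complex.cos (π / 2 * (w + s / 2)) ≠ 0 := by
    apply cos_ne <;> rw [Complex.add_re, hwre] <;> simp <;> linarith
  have k2 : Complex.sin (π / 2 * (w - s / 2)) ≠ 0 := by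
    rw [← mul_Sfun]
    refine mul_ne_zero n1 ?_
    apply Sfun_ne <;> rw [Complex.sub_re, hwre] <;> simp <;> linarith
  clear this g1 g2 s1 s2 x1 x2 d y1 y2 y1n y2n
  generalize Complex.cos (π / 2 * (w + s / 2)) = c at *
  generalize Complex.sin (π / 2 * (w - s / 2)) = c' at *
  generalize completedRiemannZeta (w + s / 2) = L1
  generalize completedRiemannZeta (w - s / 2) = L2
  have ew : w - s / 2 - 1 = -(1 + s / 2 - w) := by ring
  rw [ew]
  generalize w - s / 2 = a1 at *
  generalize w + s / 2 - 1 = a2 at *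
  generalize w + s / 2 = a3 at *
  generalize 1 + s / 2 - w = a4 at *
  field_simp
  ring

lemma rhs_eq {s : ℂ} (hs0 : s ≠ 0) (hs1 : -1 < s.re) (hs2 : s.re < 1) {α : ℝ} (hα : 0 < α) :
    (1 / (4 * (π : ℂ) ^ 3)) *
          ∫ t in Set.Ioi (0 : ℝ),
            Complex.Gamma ((s - 1 + (t : ℂ) * Complex.I) / 4) *
            Complex.Gamma ((s - 1 - (t : ℂ) * Complex.I) / 4) *
            Complex.Gamma ((-s + 1 + (t : ℂ) * Complex.I) / 4) *
            Complex.Gamma ((-s + 1 - (t : ℂ) * Complex.I) / 4) *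
            XiR (((t : ℂ) - Complex.I * s) / 2) * XiR (((t : ℂ) + Complex.I * s) / 2) *
            ((Real.cos (t / 2 * Real.log α) : ℝ) : ℂ) / ((t : ℂ) ^ 2 + (s + 1) ^ 2) =
    1 / (8 * π) * ∫ τ : ℝ, (α : ℂ) ^ (τ * I) * QQ s τ := by
  have hα' : (α : ℂ) ≠ 0 := by exact_mod_cast hα.ne'
  have hQ := (K_side hs0 hs1 hs2 hα).1
  have hpi := pi_ne
  rw [integral_full_half hQ]
  have e1 : ∀ t : ℝ, Complex.Gamma ((s - 1 + (t : ℂ) * Complex.I) / 4) *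
            Complex.Gamma ((s - 1 - (t : ℂ) * Complex.I) / 4) *
            Complex.Gamma ((-s + 1 + (t : ℂ) * Complex.I) / 4) *
            Complex.Gamma ((-s + 1 - (t : ℂ) * Complex.I) / 4) *
            XiR (((t : ℂ) - Complex.I * s) / 2) * XiR (((t : ℂ) + Complex.I * s) / 2) *
            ((Real.cos (t / 2 * Real.log α) : ℝ) : ℂ) / ((t : ℂ) ^ 2 + (s + 1) ^ 2) =
      (fun τ : ℝ => π ^ 2 / 2 * (QQ s τ * ((Real.cos (τ * Real.log α) : ℝ) : ℂ))) (2⁻¹ * t) := by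
    intro t
    rw [mul_div_right_comm, integrand_eq hs1 hs2]
    simp only
    rw [show (2⁻¹ : ℝ) * t = t / 2 by ring]
    ring
  have e2 : ∀ τ : ℝ, (α : ℂ) ^ (τ * I) * QQ s τ + (α : ℂ) ^ (((-τ : ℝ) : ℂ) * I) * QQ s (-τ) =
      2 * (QQ s τ * ((Real.cos (τ * Real.log α) : ℝ) : ℂ)) := by
    intro τ
    rw [QQ_neg, Complex.cpow_def_of_ne_zero hα', Complex.cpow_def_of_ne_zero hα',
      ← Complex.ofReal_log hα.le, Complex.ofReal_cos, Complex.cos]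
    push_cast
    rw [show (Real.log α : ℂ) * (τ * I) = τ * Real.log α * I by ring,
      show (Real.log α : ℂ) * (-τ * I) = -(τ * Real.log α) * I by ring]
    ring
  simp_rw [e1, e2]
  have e3 := integral_comp_mul_left_Ioi
    (fun τ : ℝ => (π : ℂ) ^ 2 / 2 * (QQ s τ * ((Real.cos (τ * Real.log α) : ℝ) : ℂ))) 0
    (by norm_num : (0 : ℝ) < 2⁻¹)
  beta_reduce at e3
  rw [e3, mul_zero, integral_const_mul, integral_const_mul, Complex.real_smul]
  generalize (∫ τ in Set.Ioi (0 : ℝ), QQ s τ * ((Real.cos (τ * Real.log α) : ℝ) : ℂ)) = J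
  push_cast
  field_simp
  ring

theorem new_modular_transformation
    (s : ℂ) (hs0 : s ≠ 0) (hs1 : -1 < s.re) (hs2 : s.re < 1)
    (α β : ℝ) (hα : 0 < α) (hβ : 0 < β) (hαβ : α * β = 1) :
    (Real.sqrt α : ℂ) * (∫ x in Set.Ioi (0 : ℝ), Kbes (s / 2) ((2 * π * α * x : ℝ) : ℂ) * fRam x s)
      = (Real.sqrt β : ℂ) *
          (∫ x in Set.Ioi (0 : ℝ), Kbes (s / 2) ((2 * π * β * x : ℝ) : ℂ) * fRam x s)
    ∧ (Real.sqrt α : ℂ) *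
          (∫ x in Set.Ioi (0 : ℝ), Kbes (s / 2) ((2 * π * α * x : ℝ) : ℂ) * fRam x s)
      = (1 / (4 * (π : ℂ) ^ 3)) *
          ∫ t in Set.Ioi (0 : ℝ),
            Complex.Gamma ((s - 1 + (t : ℂ) * Complex.I) / 4) *
            Complex.Gamma ((s - 1 - (t : ℂ) * Complex.I) / 4) *
            Complex.Gamma ((-s + 1 + (t : ℂ) * Complex.I) / 4) *
            Complex.Gamma ((-s + 1 - (t : ℂ) * Complex.I) / 4) *
            XiR (((t : ℂ) - Complex.I * s) / 2) * XiR (((t : ℂ) + Complex.I * s) / 2) *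
            ((Real.cos (t / 2 * Real.log α) : ℝ) : ℂ) / ((t : ℂ) ^ 2 + (s + 1) ^ 2) := by
  have hA := (K_side hs0 hs1 hs2 hα).2.trans (rhs_eq hs0 hs1 hs2 hα).symm
  have hB := (K_side hs0 hs1 hs2 hβ).2.trans (rhs_eq hs0 hs1 hs2 hβ).symm
  have hlog : Real.log β = -Real.log α := by
    rw [← Real.log_inv, eq_inv_of_mul_eq_one_right hαβ]
  refine ⟨?_, hA⟩
  rw [hA, hB, hlog]
  simp only [mul_neg, Real.cos_neg]
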